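/- For integers m, n ≥ 2, the following are equivalent: (i) the groups BS(1,m) and BS(1,n) are quasi-isometric; (ii) BS(1,m) and BS(1,n) are commensurable, i.e. contain isomorphic subgroups of finite index; (iii) there exist integers r, j, k > 0 such that m = r^j and n = r^k. -/

import Mathlib

/-- `f : X → Y` is a `(K,C)`-quasi-isometry with respect to the distance
functions `dX`, `dY`. -/
def IsQI {X Y : Type*} (K C : ℝ) (dX : X → X → ℝ) (dY : Y → Y → ℝ)
    (f : X → Y) : Prop :=
  (∀ x₁ x₂ : X, dX x₁ x₂ / K - C ≤ dY (f x₁) (f x₂)) ∧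
  (∀ x₁ x₂ : X, dY (f x₁) (f x₂) ≤ K * dX x₁ x₂ + C) ∧
  (∀ y : Y, ∃ x : X, dY (f x) y ≤ C)

/-- The word metric on a group `G` associated to a generating set `S`:
the distance from `g` to `h` is the length of a shortest word in the
elements of `S` and their inverses representing `g⁻¹ * h`. -/
noncomputable def wordDist {G : Type*} [Group G] (S : Set G) (g h : G) : ℝ :=
  sInf {r : ℝ | ∃ L : List G, (∀ x ∈ L, x ∈ S ∨ x⁻¹ ∈ S) ∧
      L.prod = g⁻¹ * h ∧ r = L.length}

/-- Two groups are quasi-isometric if, when equipped with word metrics coming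
from finite generating sets, there is a quasi-isometry between them. -/
def QuasiIsometricGroups (G H : Type*) [Group G] [Group H] : Prop :=
  ∃ (S : Finset G) (T : Finset H),
    Subgroup.closure (S : Set G) = ⊤ ∧ Subgroup.closure (T : Set H) = ⊤ ∧
    ∃ (K C : ℝ) (f : G → H), 1 ≤ K ∧ 0 ≤ C ∧
      IsQI K C (wordDist (S : Set G)) (wordDist (T : Set H)) f

/-- Two groups are (abstractly) commensurable if they contain isomorphic
subgroups of finite index. -/
def CommensurableGroups (G H : Type*) [Group G] [Group H] : Prop :=
  ∃ (G₁ : Subgroup G) (H₁ : Subgroup H),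
    G₁.FiniteIndex ∧ H₁.FiniteIndex ∧ Nonempty (G₁ ≃* H₁)

/-- The relators for the group
`Γ(n₁,…,n_k) = ⟨a₁,…,a_k, b ∣ aᵢ⁻¹ b aᵢ = b^{nᵢ}, aᵢaⱼ = aⱼaᵢ (i ≠ j)⟩`.
The generator `aᵢ` is `Sum.inl i` and `b` is `Sum.inr ()`. -/
def gammaRels {k : ℕ} (n : Fin k → ℕ) : Set (FreeGroup (Fin k ⊕ Unit)) :=
  {r | (∃ i : Fin k,
        r = (FreeGroup.of (Sum.inl i))⁻¹ * FreeGroup.of (Sum.inr ()) *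
            FreeGroup.of (Sum.inl i) * (FreeGroup.of (Sum.inr ()) ^ (n i))⁻¹) ∨
      (∃ i j : Fin k, i ≠ j ∧
        r = FreeGroup.of (Sum.inl i) * FreeGroup.of (Sum.inl j) *
            (FreeGroup.of (Sum.inl i))⁻¹ * (FreeGroup.of (Sum.inl j))⁻¹)}

/-- The group `Γ(n₁,…,n_k)` given by the presentation
`⟨a₁,…,a_k, b ∣ aᵢ⁻¹ b aᵢ = b^{nᵢ}, aᵢaⱼ = aⱼaᵢ (i ≠ j)⟩`. -/
def GammaGroup {k : ℕ} (n : Fin k → ℕ) : Type := PresentedGroup (gammaRels n)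

instance {k : ℕ} (n : Fin k → ℕ) : Group (GammaGroup n) := by
  unfold GammaGroup; infer_instance

/-- The generator `aᵢ` of `Γ(n₁,…,n_k)`. -/
def gammaA {k : ℕ} (n : Fin k → ℕ) (i : Fin k) : GammaGroup n :=
  PresentedGroup.of (rels := gammaRels n) (Sum.inl i)

/-- The generator `b` of `Γ(n₁,…,n_k)`. -/
def gammaB {k : ℕ} (n : Fin k → ℕ) : GammaGroup n :=
  PresentedGroup.of (rels := gammaRels n) (Sum.inr ())

/-- The solvable Baumslag–Solitar group `BS(1,n) = ⟨a, b ∣ a b a⁻¹ = bⁿ⟩`.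
The generator `a` is `true` and `b` is `false`. -/
def BS (n : ℕ) : Type :=
  PresentedGroup {FreeGroup.of true * FreeGroup.of false * (FreeGroup.of true)⁻¹ *
    (FreeGroup.of false ^ n)⁻¹}

instance (n : ℕ) : Group (BS n) := by unfold BS; infer_instance

/-!
If `m = r ^ j` and `n = r ^ k`, then `BS(1,m ^ k)` and `BS(1,n ^ j)` are the same group, which
embeds with finite index in both `BS(1,m)` and `BS(1,n)`.

Conversely, the Cayley complex of `BS(1,n)` is a tree of planes. A locally finite 2-cycle in it is
a union of horizontal strips, each of which it contains entirely or not at all. Pushing planes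
forward along a quasi-isometry `f : BS(1,m) → BS(1,n)` therefore shows that `f` maps cosets of
`⟨b⟩` within bounded distance of cosets of `⟨b⟩`. Growth along these lines forces heights to be
rescaled by `log m / log n` up to a bounded error, so `f` and a coarse inverse `f'` induce
Lipschitz maps between the `m`-adic and the `n`-adic boundary.

The number of small `n`-adic balls that `f'` sends into a given `m`-adic ball is bounded if their
size is comparable to that of the `m`-adic ball. The density of the preimage, relative to the
volume of the `m`-adic ball, is the average of the densities for its `m` sub-balls. A ball of
almost maximal density therefore has descendants of almost maximal density down to any given
depth. By the pigeonhole principle two of these have the same number of `n`-adic balls in the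
preimage, so the ratio of their densities has the form `m ^ d / n ^ e`. It is so close to `1` that
`m ^ d = n ^ e`.
-/

section Coarse

open Pointwise

variable {G H K : Type*} [Group G] [Group H] [Group K]

lemma inv_mul_mem_mul {F F' : Set G} {x y z : G} (hxy : x⁻¹ * y ∈ F) (hyz : y⁻¹ * z ∈ F') :
    x⁻¹ * z ∈ F * F' :=
  ⟨_, hxy, _, hyz, by group⟩

lemma inv_mul_mem_inv {F : Set G} {x y : G} (hxy : x⁻¹ * y ∈ F) : y⁻¹ * x ∈ F⁻¹ := by
  simpa using hxy

/-- Bornologous maps between groups, with respect to the coarse structures whose entourages are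
the sets `{(g, h) | g⁻¹ * h ∈ F}` for finite `F`. For finitely generated groups this is the coarse
structure of any word metric. -/
def IsBornologous (f : G → H) : Prop :=
  ∀ F : Set G, F.Finite → ∃ F' : Set H, F'.Finite ∧ ∀ g h, g⁻¹ * h ∈ F → (f g)⁻¹ * f h ∈ F'

/-- Effectively proper maps: the converse control to `IsBornologous`, bounding the distance of two
points by that of their images. -/
def IsEffectivelyProper (f : G → H) : Prop :=
  ∀ F : Set H, F.Finite → ∃ F' : Set G, F'.Finite ∧ ∀ g h, (f g)⁻¹ * f h ∈ F → g⁻¹ * h ∈ F'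

/-- Maps whose image is a net: every point lies uniformly close to the image. -/
def IsCoarselyOnto (f : G → H) : Prop :=
  ∃ B : Set H, B.Finite ∧ ∀ y, ∃ x, (f x)⁻¹ * y ∈ B

/-- Self-maps at finite distance from the identity. -/
def IsCloseToId (f : G → G) : Prop :=
  ∃ F : Set G, F.Finite ∧ ∀ g, g⁻¹ * f g ∈ F

/-- `f` and `f'` are mutually inverse coarse equivalences. -/
structure CoarseEquiv (f : G → H) (f' : H → G) : Prop where
  bornologous : IsBornologous f
  bornologous' : IsBornologous f'
  close : IsCloseToId fun g => f' (f g)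
  close' : IsCloseToId fun h => f (f' h)

lemma IsBornologous.comp {f : H → K} {g : G → H} (hf : IsBornologous f) (hg : IsBornologous g) :
    IsBornologous fun x => f (g x) := by
  intro F hF
  obtain ⟨F₁, hF₁, h₁⟩ := hg F hF
  obtain ⟨F₂, hF₂, h₂⟩ := hf F₁ hF₁
  exact ⟨F₂, hF₂, fun x y hxy => h₂ _ _ (h₁ _ _ hxy)⟩

lemma IsBornologous.of_monoidHom (f : G →* H) : IsBornologous f := fun F hF =>
  ⟨f '' F, hF.image f, fun g h hgh => ⟨_, hgh, by simp⟩⟩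

lemma IsEffectivelyProper.of_injective {f : G →* H} (hf : Function.Injective f) :
    IsEffectivelyProper f := fun F hF =>
  ⟨f ⁻¹' F, hF.preimage hf.injOn, fun g h hgh => by simpa using hgh⟩

lemma IsCoarselyOnto.subtype (G₁ : Subgroup G) [G₁.FiniteIndex] : IsCoarselyOnto G₁.subtype := by
  refine ⟨Set.range fun q : G ⧸ G₁ => q.out⁻¹, Set.finite_range _, fun y => ?_⟩
  have hout : ((y⁻¹ : G) : G ⧸ G₁) = ((y⁻¹ : G) : G ⧸ G₁).out := (QuotientGroup.out_eq' _).symm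
  refine ⟨⟨y * ((y⁻¹ : G) : G ⧸ G₁).out, by simpa using QuotientGroup.eq.1 hout⟩,
    ((y⁻¹ : G) : G ⧸ G₁), by simp⟩

namespace CoarseEquiv

lemma symm {f : G → H} {f' : H → G} (h : CoarseEquiv f f') : CoarseEquiv f' f :=
  ⟨h.bornologous', h.bornologous, h.close', h.close⟩

lemma close_trans {f : G → H} {f' : H → G} {k : H → K} {k' : K → H} (h : CoarseEquiv f f')
    (hk : CoarseEquiv k k') : IsCloseToId fun g => f' (k' (k (f g))) := by
  obtain ⟨F₁, hF₁, h₁⟩ := h.close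
  obtain ⟨F₂, hF₂, h₂⟩ := hk.close
  obtain ⟨F₃, hF₃, h₃⟩ := h.bornologous' F₂ hF₂
  exact ⟨F₁ * F₃, hF₁.mul hF₃, fun g => inv_mul_mem_mul (h₁ g) (h₃ _ _ (h₂ (f g)))⟩

lemma trans {f : G → H} {f' : H → G} {k : H → K} {k' : K → H} (h : CoarseEquiv f f')
    (hk : CoarseEquiv k k') : CoarseEquiv (fun x => k (f x)) (fun x => f' (k' x)) :=
  ⟨hk.bornologous.comp h.bornologous, h.bornologous'.comp hk.bornologous', h.close_trans hk,
    hk.symm.close_trans h.symm⟩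

lemma of_mulEquiv (e : G ≃* H) : CoarseEquiv e e.symm :=
  ⟨.of_monoidHom e.toMonoidHom, .of_monoidHom e.symm.toMonoidHom,
    ⟨{1}, Set.finite_singleton 1, by simp⟩, ⟨{1}, Set.finite_singleton 1, by simp⟩⟩

lemma exists_of_isEffectivelyProper {f : G → H} (hf : IsBornologous f)
    (hproper : IsEffectivelyProper f) (honto : IsCoarselyOnto f) : ∃ f', CoarseEquiv f f' := by
  obtain ⟨B, hB, hfB⟩ := honto
  choose f' hf' using hfB
  refine ⟨f', hf, fun F hF => ?_, ?_, ⟨B⁻¹, hB.inv, fun y => inv_mul_mem_inv (hf' y)⟩⟩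
  · obtain ⟨F', hF', hpre⟩ := hproper (B * F * B⁻¹) ((hB.mul hF).mul hB.inv)
    exact ⟨F', hF', fun y z hyz => hpre _ _
      (inv_mul_mem_mul (inv_mul_mem_mul (hf' y) hyz) (inv_mul_mem_inv (hf' z)))⟩
  · obtain ⟨F', hF', hpre⟩ := hproper B⁻¹ hB.inv
    exact ⟨F', hF', fun g => hpre _ _ (inv_mul_mem_inv (hf' (f g)))⟩

lemma isEffectivelyProper {f : G → H} {f' : H → G} (h : CoarseEquiv f f') :
    IsEffectivelyProper f := by
  intro F hF
  obtain ⟨F₁, hF₁, h₁⟩ := h.bornologous' F hF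
  obtain ⟨F₂, hF₂, h₂⟩ := h.close
  exact ⟨F₂ * F₁ * F₂⁻¹, (hF₂.mul hF₁).mul hF₂.inv, fun x y hxy =>
    inv_mul_mem_mul (inv_mul_mem_mul (h₂ x) (h₁ _ _ hxy)) (inv_mul_mem_inv (h₂ y))⟩

lemma exists_of_finiteIndex (G₁ : Subgroup G) [G₁.FiniteIndex] :
    ∃ f', CoarseEquiv (G₁.subtype : G₁ → G) f' :=
  exists_of_isEffectivelyProper (.of_monoidHom _) (.of_injective G₁.subtype_injective)
    (.subtype G₁)

end CoarseEquiv

lemma CommensurableGroups.exists_coarseEquiv (h : CommensurableGroups G H) :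
    ∃ (f : G → H) (f' : H → G), CoarseEquiv f f' := by
  obtain ⟨G₁, H₁, _, _, ⟨e⟩⟩ := h
  obtain ⟨f', hf⟩ := CoarseEquiv.exists_of_finiteIndex G₁
  obtain ⟨k', hk⟩ := CoarseEquiv.exists_of_finiteIndex H₁
  exact ⟨_, _, (hf.symm.trans (.of_mulEquiv e)).trans hk⟩

section wordDist

variable {S : Set G} {T : Set H}

lemma wordDist_le {g h : G} (L : List G) (hL : ∀ x ∈ L, x ∈ S ∨ x⁻¹ ∈ S)
    (hprod : L.prod = g⁻¹ * h) : wordDist S g h ≤ L.length :=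
  csInf_le ⟨0, by rintro _ ⟨L, -, -, rfl⟩; positivity⟩ ⟨L, hL, hprod, rfl⟩

lemma wordDist_nonneg (S : Set G) (g h : G) : 0 ≤ wordDist S g h :=
  Real.sInf_nonneg (by rintro _ ⟨L, -, -, rfl⟩; positivity)

lemma wordDist_self (S : Set G) (g : G) : wordDist S g g = 0 :=
  le_antisymm (by simpa using wordDist_le (S := S) (g := g) (h := g) [] (by simp) (by simp))
    (wordDist_nonneg S g g)

lemma wordDist_eq_one_left (S : Set G) (g h : G) : wordDist S g h = wordDist S 1 (g⁻¹ * h) := by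
  simp [wordDist]

lemma exists_length_eq_wordDist (hS : Subgroup.closure S = ⊤) (g h : G) :
    ∃ L : List G, (∀ x ∈ L, x ∈ S ∨ x⁻¹ ∈ S) ∧ L.prod = g⁻¹ * h ∧
      (L.length : ℝ) = wordDist S g h := by
  have hword : ∃ L : List G, (∀ x ∈ L, x ∈ S ∨ x⁻¹ ∈ S) ∧ L.prod = g⁻¹ * h := by
    have hmem : g⁻¹ * h ∈ (Subgroup.closure S).toSubmonoid := by simp [hS]
    rw [Subgroup.closure_toSubmonoid] at hmem
    exact Submonoid.exists_list_of_mem_closure hmem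
  obtain ⟨L, ⟨hL, hprod⟩, hmin⟩ := exists_minimalFor_of_wellFoundedLT _ List.length hword
  refine ⟨L, hL, hprod, le_antisymm (le_csInf ⟨_, L, hL, hprod, rfl⟩ ?_) (wordDist_le L hL hprod)⟩
  rintro _ ⟨L', hL', hprod', rfl⟩
  exact_mod_cast (le_total L.length L'.length).elim id (hmin ⟨hL', hprod'⟩)

lemma wordDist_triangle (hS : Subgroup.closure S = ⊤) (g h k : G) :
    wordDist S g k ≤ wordDist S g h + wordDist S h k := by
  obtain ⟨L, hL, hprod, hlen⟩ := exists_length_eq_wordDist hS g h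
  obtain ⟨L', hL', hprod', hlen'⟩ := exists_length_eq_wordDist hS h k
  have hle := wordDist_le (S := S) (g := g) (h := k) (L ++ L')
    (fun x hx => (List.mem_append.1 hx).elim (hL x) (hL' x)) (by simp [hprod, hprod', mul_assoc])
  rwa [List.length_append, Nat.cast_add, hlen, hlen'] at hle

lemma finite_wordDist_le (hfin : S.Finite) (hS : Subgroup.closure S = ⊤) (R : ℝ) :
    {d : G | wordDist S 1 d ≤ R}.Finite := by
  have := (hfin.union hfin.inv).to_subtype
  refine ((List.finite_length_le ↥(S ∪ S⁻¹) ⌊R⌋₊).image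
    fun L => (L.map Subtype.val).prod).subset fun d (hd : wordDist S 1 d ≤ R) => ?_
  obtain ⟨L, hL, hprod, hlen⟩ := exists_length_eq_wordDist hS 1 d
  lift L to List ↥(S ∪ S⁻¹) using hL
  exact ⟨L, Nat.le_floor (by simpa using hlen.trans_le hd), by simpa using hprod⟩

lemma exists_wordDist_le_of_finite {F : Set G} (hF : F.Finite) (S : Set G) :
    ∃ R : ℝ, 0 ≤ R ∧ ∀ g h, g⁻¹ * h ∈ F → wordDist S g h ≤ R := by
  obtain ⟨R, hR⟩ := (hF.image (wordDist S 1)).bddAbove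
  refine ⟨max R 0, le_max_right _ _, fun g h hgh => ?_⟩
  rw [wordDist_eq_one_left]
  exact (hR ⟨_, hgh, rfl⟩).trans (le_max_left _ _)

lemma IsBornologous.exists_wordDist_le {f : G → H} (hf : IsBornologous f) (hfin : S.Finite)
    (hS : Subgroup.closure S = ⊤) (hT : Subgroup.closure T = ⊤) :
    ∃ K : ℝ, 0 ≤ K ∧ ∀ g h, wordDist T (f g) (f h) ≤ K * wordDist S g h := by
  obtain ⟨F, hF, hfF⟩ := hf _ (hfin.union hfin.inv)
  obtain ⟨K, hK, hKF⟩ := exists_wordDist_le_of_finite hF T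
  have hword (L : List G) (hL : ∀ x ∈ L, x ∈ S ∨ x⁻¹ ∈ S) (g : G) :
      wordDist T (f g) (f (g * L.prod)) ≤ K * L.length := by
    induction L generalizing g with
    | nil => simp [wordDist_self]
    | cons s L ih =>
      have hstep := hKF _ _ (hfF g (g * s) (by simpa using hL s List.mem_cons_self))
      have hrest := ih (fun x hx => hL x (List.mem_cons_of_mem _ hx)) (g * s)
      have htri := wordDist_triangle hT (f g) (f (g * s)) (f (g * s * L.prod))
      rw [List.prod_cons, List.length_cons, ← mul_assoc]
      push_cast
      linarith
  refine ⟨K, hK, fun g h => ?_⟩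
  obtain ⟨L, hL, hprod, hlen⟩ := exists_length_eq_wordDist hS g h
  simpa [hprod, hlen] using hword L hL g

end wordDist

lemma QuasiIsometricGroups.exists_coarseEquiv (h : QuasiIsometricGroups G H) :
    ∃ (f : G → H) (f' : H → G), CoarseEquiv f f' := by
  obtain ⟨S, T, hS, hT, K, C, f, hK, -, hlower, hupper, honto⟩ := h
  refine ⟨f, CoarseEquiv.exists_of_isEffectivelyProper (fun F hF => ?_) (fun F hF => ?_)
    ⟨_, finite_wordDist_le T.finite_toSet hT C, fun y => ?_⟩⟩
  · obtain ⟨R, -, hRF⟩ := exists_wordDist_le_of_finite hF (S : Set G)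
    refine ⟨_, finite_wordDist_le T.finite_toSet hT (K * R + C), fun x y hxy => ?_⟩
    rw [Set.mem_ofPred_eq, ← wordDist_eq_one_left]
    exact (hupper x y).trans (by gcongr; exact hRF x y hxy)
  · obtain ⟨R, -, hRF⟩ := exists_wordDist_le_of_finite hF (T : Set H)
    refine ⟨_, finite_wordDist_le S.finite_toSet hS ((R + C) * K), fun x y hxy => ?_⟩
    rw [Set.mem_ofPred_eq, ← wordDist_eq_one_left, ← div_le_iff₀ (by linarith)]
    linarith [hlower x y, hRF _ _ hxy]
  · obtain ⟨x, hx⟩ := honto y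
    exact ⟨x, by rwa [Set.mem_ofPred_eq, ← wordDist_eq_one_left]⟩

lemma CoarseEquiv.quasiIsometricGroups {S : Finset G} {T : Finset H}
    (hS : Subgroup.closure (S : Set G) = ⊤) (hT : Subgroup.closure (T : Set H) = ⊤) {f : G → H}
    {f' : H → G} (h : CoarseEquiv f f') : QuasiIsometricGroups G H := by
  obtain ⟨K, hK, hKf⟩ := h.bornologous.exists_wordDist_le S.finite_toSet hS hT
  obtain ⟨K', hK', hKf'⟩ := h.bornologous'.exists_wordDist_le T.finite_toSet hT hS
  obtain ⟨F, hF, hfF⟩ := h.close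
  obtain ⟨F', hF', hfF'⟩ := h.close'
  obtain ⟨R, hR, hRF⟩ := exists_wordDist_le_of_finite (hF.union hF.inv) (S : Set G)
  obtain ⟨R', hR', hRF'⟩ := exists_wordDist_le_of_finite hF'.inv (T : Set H)
  refine ⟨S, T, hS, hT, K + K' + 1, 2 * R + R', f, by linarith, by linarith,
    fun x y => ?_, fun x y => ?_, fun y => ⟨f' y, ?_⟩⟩
  · have htri := wordDist_triangle hS x (f' (f x)) y
    have htri' := wordDist_triangle hS (f' (f x)) (f' (f y)) y
    have hx := hRF x (f' (f x)) (.inl (hfF x))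
    have hy := hRF (f' (f y)) y (.inr (inv_mul_mem_inv (hfF y)))
    have hnonneg := wordDist_nonneg (T : Set H) (f x) (f y)
    rw [sub_le_iff_le_add, div_le_iff₀ (by linarith)]
    nlinarith [hKf' (f x) (f y), mul_nonneg hK hnonneg, mul_nonneg hK hR, mul_nonneg hK' hR,
      mul_nonneg (add_nonneg hK hK') hR']
  · nlinarith [hKf x y, mul_nonneg hK' (wordDist_nonneg (S : Set G) x y),
      wordDist_nonneg (S : Set G) x y]
  · linarith [hRF' _ _ (inv_mul_mem_inv (hfF' y))]

end Coarse

namespace BS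

open Pointwise

section Generators

variable {n : ℕ} {G : Type*} [Group G]

/-- The generator `a`, acting as multiplication by `n` in the affine representation. -/
def a : BS n :=
  PresentedGroup.of (rels := {FreeGroup.of true * FreeGroup.of false * (FreeGroup.of true)⁻¹ *
    (FreeGroup.of false ^ n)⁻¹}) true

/-- The generator `b`, acting as translation by `1` in the affine representation. -/
def b : BS n :=
  PresentedGroup.of (rels := {FreeGroup.of true * FreeGroup.of false * (FreeGroup.of true)⁻¹ *
    (FreeGroup.of false ^ n)⁻¹}) false

lemma a_mul_b : (a * b : BS n) = b ^ n * a := by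
  have hrel := PresentedGroup.one_of_mem (rels := {FreeGroup.of true * FreeGroup.of false *
    (FreeGroup.of true)⁻¹ * (FreeGroup.of false ^ n)⁻¹}) (Set.mem_singleton _)
  simp only [map_mul, map_inv, map_pow] at hrel
  rwa [mul_inv_eq_one, mul_inv_eq_iff_eq_mul] at hrel

lemma a_pow_mul_b_zpow (i : ℕ) (k : ℤ) :
    (a ^ i * b ^ k : BS n) = b ^ ((n : ℤ) ^ i * k) * a ^ i := by
  induction i generalizing k with
  | zero => simp
  | succ i ih =>
    have hconj : (a * b ^ k : BS n) = b ^ ((n : ℤ) * k) * a := by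
      rw [← mul_inv_eq_iff_eq_mul, ← conj_zpow, mul_inv_eq_of_eq_mul a_mul_b, zpow_mul,
        zpow_natCast]
    rw [pow_succ, mul_assoc, hconj, ← mul_assoc, ih, mul_assoc, pow_succ, mul_assoc]

lemma closure_pair : Subgroup.closure ({a, b} : Set (BS n)) = ⊤ := by
  have hrange := PresentedGroup.closure_range_of ({FreeGroup.of true * FreeGroup.of false *
    (FreeGroup.of true)⁻¹ * (FreeGroup.of false ^ n)⁻¹})
  rw [Bool.range_eq, Set.pair_comm] at hrange
  exact hrange

lemma left_induction {P : BS n → Prop} (one : P 1) (a_mul : ∀ g, P (a * g) ↔ P g)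
    (b_mul : ∀ g, P (b * g) ↔ P g) (g : BS n) : P g := by
  have hg : g ∈ Subgroup.closure ({a, b} : Set (BS n)) := by simp [closure_pair]
  induction hg using Subgroup.closure_induction_left with
  | one => exact one
  | mul_left s hs g _ ih =>
    obtain rfl | rfl := hs
    exacts [(a_mul g).2 ih, (b_mul g).2 ih]
  | inv_mul_cancel s hs g _ ih =>
    obtain rfl | rfl := hs
    exacts [(a_mul _).1 (by simpa using ih), (b_mul _).1 (by simpa using ih)]

/-- The homomorphism out of `BS n` determined by the images `α`, `β` of the generators `a`, `b`. -/
def lift (α β : G) (h : α * β = β ^ n * α) : BS n →* G :=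
  PresentedGroup.toGroup (rels := {FreeGroup.of true * FreeGroup.of false *
    (FreeGroup.of true)⁻¹ * (FreeGroup.of false ^ n)⁻¹}) (f := fun i => if i then α else β)
    (by simp [h])

@[simp] lemma lift_a (α β : G) (h : α * β = β ^ n * α) : lift α β h a = α :=
  PresentedGroup.toGroup.of _

@[simp] lemma lift_b (α β : G) (h : α * β = β ^ n * α) : lift α β h b = β :=
  PresentedGroup.toGroup.of _

lemma hom_ext {φ ψ : BS n →* G} (ha : φ a = ψ a) (hb : φ b = ψ b) : φ = ψ :=
  MonoidHom.eq_of_eqOn_dense closure_pair (by rintro _ (rfl | rfl) <;> assumption)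

lemma exists_a_pow_mul_eq (g : BS n) : ∃ (i : ℕ) (k j : ℤ), a ^ i * g = b ^ k * a ^ j := by
  induction g using left_induction with
  | one => exact ⟨0, 0, 0, by simp⟩
  | a_mul g =>
    refine ⟨fun ⟨i, k, j, hg⟩ => ⟨i + 1, k, j, by rw [pow_succ, mul_assoc, hg]⟩,
      fun ⟨i, k, j, hg⟩ => ⟨i, n * k, 1 + j, ?_⟩⟩
    have hconj := a_pow_mul_b_zpow (n := n) 1 k
    rw [pow_one, pow_one] at hconj
    rw [← mul_assoc, ← pow_succ, pow_succ', mul_assoc, hg, ← mul_assoc, hconj, zpow_add, zpow_one,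
      mul_assoc]
  | b_mul g =>
    have hconj (i : ℕ) : (a ^ i * (b * g) : BS n) = b ^ ((n : ℤ) ^ i) * (a ^ i * g) := by
      rw [← mul_assoc, ← mul_assoc]
      simpa using congrArg (· * g) (a_pow_mul_b_zpow (n := n) i 1)
    refine ⟨fun ⟨i, k, j, hg⟩ => ⟨i, -(n : ℤ) ^ i + k, j, ?_⟩,
      fun ⟨i, k, j, hg⟩ => ⟨i, (n : ℤ) ^ i + k, j, ?_⟩⟩
    · rw [zpow_add, mul_assoc, ← hg, hconj, zpow_neg, inv_mul_cancel_left]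
    · rw [hconj, hg, zpow_add, mul_assoc]

/-- The height homomorphism `a ↦ 1`, `b ↦ 0`. -/
def heightHom (n : ℕ) : BS n →* Multiplicative ℤ :=
  lift (Multiplicative.ofAdd 1) 1 (by simp)

/-- The height of `g`: its exponent sum in `a`. -/
def height (g : BS n) : ℤ := (heightHom n g).toAdd

@[simp] lemma height_mul (g h : BS n) : height (g * h) = height g + height h := by simp [height]

@[simp] lemma height_one : height (1 : BS n) = 0 := by simp [height]

@[simp] lemma height_inv (g : BS n) : height g⁻¹ = -height g := by simp [height]

@[simp] lemma height_zpow (g : BS n) (k : ℤ) : height (g ^ k) = k * height g := by simp [height]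

@[simp] lemma height_pow (g : BS n) (k : ℕ) : height (g ^ k) = k * height g := by simp [height]

@[simp] lemma height_a : height (a : BS n) = 1 := by simp [height, heightHom]

@[simp] lemma height_b : height (b : BS n) = 0 := by simp [height, heightHom]

end Generators

section Offset

variable {n : ℕ} [NeZero n]

/-- The representation of `BS n` by affine bijections of `ℚ`, with `a = (q ↦ n * q)` and
`b = (q ↦ 1 + q)`. -/
def affineRep (n : ℕ) [NeZero n] : BS n →* Equiv.Perm ℚ :=
  lift (Equiv.mulLeft₀ (n : ℚ) (NeZero.ne _)) (Equiv.addLeft 1) <| by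
    ext q
    simp [mul_add, Equiv.Perm.mul_apply]

/-- The translation part of `g` in the affine representation. Together with the height it is a
faithful system of coordinates on `BS n`, and `g` acts as `q ↦ offset g + n ^ height g * q`. -/
def offset (g : BS n) : ℚ := affineRep n g 0

lemma affineRep_apply (g : BS n) (q : ℚ) :
    affineRep n g q = offset g + (n : ℚ) ^ height g * q := by
  have hn : (n : ℚ) ≠ 0 := NeZero.ne _
  revert q
  induction g using left_induction with
  | one => simp [offset]
  | a_mul g =>
    simp only [offset, affineRep, map_mul, lift_a, Equiv.Perm.mul_apply, Equiv.mulLeft₀_apply,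
      height_mul, height_a, zpow_one_add₀ hn, mul_assoc, ← mul_add, mul_right_inj' hn]
  | b_mul g =>
    simp only [offset, affineRep, map_mul, lift_b, Equiv.Perm.mul_apply, Equiv.coe_addLeft,
      height_mul, height_b, zero_add, add_assoc, add_right_inj]

@[simp] lemma offset_mul (g h : BS n) : offset (g * h) = offset g + (n : ℚ) ^ height g * offset h :=
  affineRep_apply g (offset h) ▸ by simp [offset]

@[simp] lemma offset_one : offset (1 : BS n) = 0 := by simp [offset]

@[simp] lemma offset_inv (g : BS n) : offset g⁻¹ = -((n : ℚ) ^ (-height g) * offset g) := by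
  have hinv := offset_mul g⁻¹ g
  rw [inv_mul_cancel, offset_one, height_inv] at hinv
  linarith

@[simp] lemma offset_a_zpow (k : ℤ) : offset (a ^ k : BS n) = 0 := by
  induction k with
  | zero => simp
  | succ k ih => simp_all [zpow_add_one, offset, affineRep]
  | pred k ih => simp_all [zpow_sub_one, offset, affineRep]

@[simp] lemma offset_a_pow (k : ℕ) : offset (a ^ k : BS n) = 0 := mod_cast offset_a_zpow (n := n) k

@[simp] lemma offset_a : offset (a : BS n) = 0 := mod_cast offset_a_pow (n := n) 1

@[simp] lemma offset_b_zpow (k : ℤ) : offset (b ^ k : BS n) = k := by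
  simp [offset, affineRep]

@[simp] lemma offset_b_pow (k : ℕ) : offset (b ^ k : BS n) = k := mod_cast offset_b_zpow (n := n) k

@[simp] lemma offset_b : offset (b : BS n) = 1 := mod_cast offset_b_pow (n := n) 1

lemma ext {g h : BS n} (hoffset : offset g = offset h) (hheight : height g = height h) :
    g = h := by
  have hoffset' : offset (h⁻¹ * g) = 0 := by simp [hoffset]
  have hheight' : height (h⁻¹ * g) = 0 := by simp [hheight]
  obtain ⟨i, k, j, hg⟩ := exists_a_pow_mul_eq (h⁻¹ * g)
  obtain rfl : k = 0 := by simpa [hoffset', eq_comm] using congrArg offset hg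
  obtain rfl : i = j := by simpa [hheight'] using congrArg height hg
  exact (inv_mul_eq_one.1 (by simpa using hg)).symm

end Offset

section Lattice

variable {n : ℕ}

/-- The subgroup `n ^ k * ℤ` of `ℚ`: the `n`-adic ball of radius `n ^ (-k)` in `ℤ[1/n]`. -/
def lattice (n : ℕ) (k : ℤ) : AddSubgroup ℚ := AddSubgroup.zmultiples ((n : ℚ) ^ k)

lemma mem_lattice {k : ℤ} {y : ℚ} : y ∈ lattice n k ↔ ∃ z : ℤ, z * (n : ℚ) ^ k = y := by
  simp [lattice, AddSubgroup.mem_zmultiples_iff]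

lemma intCast_mem_lattice_zero (z : ℤ) : (z : ℚ) ∈ lattice n 0 := mem_lattice.2 ⟨z, by simp⟩

lemma lattice_natPow (n k : ℕ) (j : ℤ) : lattice (n ^ k) j = lattice n (k * j) := by
  rw [lattice, lattice, Nat.cast_pow, ← zpow_natCast, ← zpow_mul]

lemma natCast_sub_mem_lattice {r r' k : ℕ} :
    (r - r' : ℚ) ∈ lattice n k ↔ r ≡ r' [MOD n ^ k] := by
  rw [Nat.ModEq.comm, ← Int.natCast_modEq_iff, Int.modEq_iff_dvd, mem_lattice, dvd_def]
  refine exists_congr fun z => ?_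
  rw [zpow_natCast, mul_comm, eq_comm]
  norm_cast

variable [NeZero n]

lemma lattice_antitone : Antitone (lattice n) := by
  intro k k' hk y hy
  obtain ⟨z, rfl⟩ := mem_lattice.1 hy
  obtain ⟨d, rfl⟩ := Int.le.dest hk
  refine mem_lattice.2 ⟨z * n ^ d, ?_⟩
  rw [zpow_add₀ (NeZero.ne _), zpow_natCast]
  push_cast
  ring

lemma zpow_mul_mem_lattice {k : ℤ} {y : ℚ} (t : ℤ) :
    (n : ℚ) ^ t * y ∈ lattice n (t + k) ↔ y ∈ lattice n k := by
  have hn : (n : ℚ) ^ t ≠ 0 := zpow_ne_zero _ (NeZero.ne _)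
  simp_rw [mem_lattice, zpow_add₀ (NeZero.ne (n : ℚ)), mul_left_comm _ ((n : ℚ) ^ t),
    mul_right_inj' hn]

lemma intCast_mul_zpow_mem_lattice_succ {z k : ℤ} :
    (z : ℚ) * (n : ℚ) ^ k ∈ lattice n (k + 1) ↔ (n : ℤ) ∣ z := by
  rw [mul_comm, zpow_mul_mem_lattice, mem_lattice]
  simp_rw [zpow_one, dvd_def, mul_comm (n : ℤ), eq_comm (a := z)]
  exact exists_congr fun w => by norm_cast

lemma exists_offset_mem_lattice (g : BS n) : ∃ k : ℕ, offset g ∈ lattice n (-k) := by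
  obtain ⟨i, k, j, hg⟩ := exists_a_pow_mul_eq g
  have hoffset : (n : ℚ) ^ (i : ℤ) * offset g = k := by simpa using congrArg offset hg
  refine ⟨i, (zpow_mul_mem_lattice i).1 ?_⟩
  rw [hoffset, add_neg_cancel]
  exact intCast_mem_lattice_zero k

lemma exists_offset_eq_height_eq {k : ℤ} {y : ℚ} (hy : y ∈ lattice n k) (t : ℤ) :
    ∃ g : BS n, offset g = y ∧ height g = t := by
  obtain ⟨z, rfl⟩ := mem_lattice.1 hy
  exact ⟨a ^ k * b ^ z * a ^ (t - k), by simp [mul_comm], by simp⟩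

lemma sum_range_ite_mem_lattice {R : Type*} [AddCommMonoidWithOne R] (y : ℚ) (k : ℤ)
    [∀ j y, Decidable (y ∈ lattice n j)] :
    ∑ i ∈ Finset.range n, (if y - i * (n : ℚ) ^ k ∈ lattice n (k + 1) then (1 : R) else 0) =
      if y ∈ lattice n k then 1 else 0 := by
  by_cases hy : y ∈ lattice n k
  · obtain ⟨z, rfl⟩ := mem_lattice.1 hy
    have hn : (0 : ℤ) < n := mod_cast NeZero.pos n
    have hdigit : ∀ i ∈ Finset.range n,
        z * (n : ℚ) ^ k - i * (n : ℚ) ^ k ∈ lattice n (k + 1) ↔ i = (z % n).toNat := by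
      intro i hi
      have hcast : z * (n : ℚ) ^ k - i * (n : ℚ) ^ k = (z - i : ℤ) * (n : ℚ) ^ k := by
        push_cast
        ring
      rw [hcast, intCast_mul_zpow_mem_lattice_succ, ← Int.modEq_iff_dvd, Int.ModEq,
        Int.emod_eq_of_lt (by positivity) (by simpa using hi)]
      have := Int.emod_nonneg z hn.ne'
      omega
    have hmem : (z % n).toNat ∈ Finset.range n := by
      have := Int.emod_lt_of_pos z hn
      simp only [Finset.mem_range]
      omega
    rw [if_pos hy, Finset.sum_congr rfl fun i hi => if_congr (hdigit i hi) rfl rfl,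
      Finset.sum_ite_eq', if_pos hmem]
  · rw [if_neg hy]
    refine Finset.sum_eq_zero fun i _ => if_neg fun hi => hy ?_
    have hshift : (i : ℚ) * (n : ℚ) ^ k ∈ lattice n k := mem_lattice.2 ⟨i, by simp⟩
    simpa using add_mem (lattice_antitone (by omega) hi) hshift

end Lattice

section Box

variable {n : ℕ} [NeZero n]

/-- An exhaustion of `BS n` by finite sets. -/
def box (n : ℕ) [NeZero n] (C : ℕ) : Set (BS n) :=
  {g | |height g| ≤ C ∧ |offset g| ≤ C ∧ offset g ∈ lattice n (-C)}

lemma box_mono : Monotone (box n) := fun _ _ h _ ⟨hheight, hoffset, hlattice⟩ =>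
  ⟨hheight.trans (by gcongr), hoffset.trans (by gcongr), lattice_antitone (by omega) hlattice⟩

lemma finite_box (C : ℕ) : (box n C).Finite := by
  have hn : (0 : ℚ) < (n : ℚ) ^ C := by have := NeZero.pos n; positivity
  refine Set.Finite.of_finite_image (f := fun g => ((n : ℚ) ^ C * offset g, height g)) ?_
    fun g _ h _ hgh => ?_
  · refine (((Set.finite_Icc (-(n ^ C * C : ℤ)) (n ^ C * C)).image ((↑) : ℤ → ℚ)).prod
      (Set.finite_Icc (-C : ℤ) C)).subset ?_
    rintro _ ⟨g, ⟨hheight, hoffset, hlattice⟩, rfl⟩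
    obtain ⟨z, hz⟩ := mem_lattice.1 hlattice
    have hcast : (n : ℚ) ^ C * offset g = z := by
      rw [← hz, zpow_neg, zpow_natCast]
      field_simp
    refine ⟨⟨z, abs_le.1 ?_, hcast.symm⟩, abs_le.1 hheight⟩
    have habs : |(z : ℚ)| ≤ n ^ C * C := by
      rw [← hcast, abs_mul, abs_of_pos hn]
      gcongr
    exact_mod_cast habs
  · obtain ⟨hoffset, hheight⟩ := Prod.mk.inj hgh
    exact ext (mul_left_cancel₀ hn.ne' hoffset) hheight

lemma exists_mem_box (g : BS n) : ∃ C, g ∈ box n C := by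
  obtain ⟨k, hk⟩ := exists_offset_mem_lattice g
  obtain ⟨c, hc⟩ := exists_nat_ge |offset g|
  refine ⟨(height g).natAbs + k + c, by rw [Int.abs_eq_natAbs]; omega, hc.trans ?_,
    lattice_antitone (by omega) hk⟩
  exact_mod_cast Nat.le_add_left _ _

lemma exists_subset_box {F : Set (BS n)} (hF : F.Finite) : ∃ C, F ⊆ box n C := by
  choose c hc using exists_mem_box (n := n)
  obtain ⟨C, hC⟩ := (hF.image c).bddAbove
  exact ⟨C, fun g hg => box_mono (hC ⟨g, hg, rfl⟩) (hc g)⟩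

lemma offset_sub_mem_lattice_of_mem_box {C : ℕ} {g h : BS n} (hgh : g⁻¹ * h ∈ box n C) :
    offset h - offset g ∈ lattice n (height g - C) := by
  have hoffset := offset_mul g (g⁻¹ * h)
  rw [mul_inv_cancel_left] at hoffset
  rw [hoffset, add_sub_cancel_left]
  exact (zpow_mul_mem_lattice (height g)).2 hgh.2.2

end Box

section Commensurability

/-- The embedding of `BS (n ^ k)` in `BS n` with `a ↦ a ^ k` and `b ↦ b`. -/
def powHom (n k : ℕ) : BS (n ^ k) →* BS n :=
  lift (a ^ k) b <| by
    have hconj := a_pow_mul_b_zpow (n := n) k 1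
    rw [mul_one, zpow_one] at hconj
    exact_mod_cast hconj

variable {n k : ℕ}

lemma height_powHom (g : BS (n ^ k)) : height (powHom n k g) = k * height g := by
  have hhom : (heightHom n).comp (powHom n k) = (zpowGroupHom (k : ℤ)).comp (heightHom (n ^ k)) :=
    hom_ext (by simp [powHom, heightHom]) (by simp [powHom, heightHom])
  simpa [height] using congrArg Multiplicative.toAdd (DFunLike.congr_fun hhom g)

variable [NeZero n]

lemma offset_powHom (g : BS (n ^ k)) : offset (powHom n k g) = offset g := by
  have hhom : (affineRep n).comp (powHom n k) = affineRep (n ^ k) :=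
    hom_ext (Equiv.ext fun q => by simp [powHom, affineRep_apply, -map_pow])
      (by simp [powHom, affineRep])
  exact congrArg (· 0) (DFunLike.congr_fun hhom g)

lemma powHom_injective (hk : k ≠ 0) : Function.Injective (powHom n k) := fun g h hgh =>
  ext (by rw [← offset_powHom, hgh, offset_powHom]) <|
    mul_left_cancel₀ (Nat.cast_ne_zero.2 hk) (by rw [← height_powHom, hgh, height_powHom])

lemma finiteIndex_range_powHom (hk : k ≠ 0) : (powHom n k).range.FiniteIndex := by
  have : NeZero k := ⟨hk⟩
  have : Finite (Multiplicative (ZMod k)) := inferInstanceAs (Finite (ZMod k))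
  let q : BS n →* Multiplicative (ZMod k) :=
    (AddMonoidHom.toMultiplicative (Int.castAddHom (ZMod k))).comp (heightHom n)
  have hq : q.ker.FiniteIndex := Subgroup.finiteIndex_ker q
  refine Subgroup.finiteIndex_of_le (H := q.ker) fun g hg => ?_
  obtain ⟨t, ht⟩ := (ZMod.intCast_zmod_eq_zero_iff_dvd (height g) k).1
    (congrArg Multiplicative.toAdd (MonoidHom.mem_ker.1 hg))
  obtain ⟨d, hd⟩ := exists_offset_mem_lattice g
  have hd' : offset g ∈ lattice (n ^ k) (-d) := by
    rw [lattice_natPow]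
    exact lattice_antitone (by nlinarith [Nat.one_le_iff_ne_zero.2 hk]) hd
  obtain ⟨h, hoffset, hheight⟩ := exists_offset_eq_height_eq hd' t
  exact ⟨h, ext (by rw [offset_powHom, hoffset]) (by rw [height_powHom, hheight, ht])⟩

lemma commensurableGroups_of_pow_eq_pow {m j : ℕ} [NeZero m] (hj : j ≠ 0) (hk : k ≠ 0)
    (h : m ^ j = n ^ k) : CommensurableGroups (BS m) (BS n) := by
  refine ⟨(powHom m j).range, (powHom n k).range, finiteIndex_range_powHom hj,
    finiteIndex_range_powHom hk, ⟨?_⟩⟩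
  exact (MonoidHom.ofInjective (powHom_injective hj)).symm.trans
    ((h ▸ MulEquiv.refl _ : BS (m ^ j) ≃* BS (n ^ k)).trans
      (MonoidHom.ofInjective (powHom_injective hk)))

end Commensurability

lemma _root_.CommensurableGroups.quasiIsometricGroups {m n : ℕ}
    (h : CommensurableGroups (BS m) (BS n)) : QuasiIsometricGroups (BS m) (BS n) := by
  classical
  obtain ⟨f, f', hf⟩ := h.exists_coarseEquiv
  exact hf.quasiIsometricGroups (S := {a, b}) (T := {a, b}) (by simpa using closure_pair)
    (by simpa using closure_pair)

end BS

/-- Cellular chains with `ZMod 2` coefficients of a complex on which `G` acts freely on cells, with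
orbits of cells indexed by `ι`. -/
abbrev CellChain (ι G : Type*) := ι × G →₀ ZMod 2

namespace CellChain

open Pointwise

variable {ι ι' ι'' G H K : Type*}

/-- The basis chain of the translate by `g` of the cell of type `i` based at `1`. -/
noncomputable abbrev cell (i : ι) (g : G) : CellChain ι G := Finsupp.single (i, g) 1

lemma linearMap_ext {M : Type*} [AddCommMonoid M] [Module (ZMod 2) M]
    {φ ψ : CellChain ι G →ₗ[ZMod 2] M} (h : ∀ i g, φ (cell i g) = ψ (cell i g)) : φ = ψ :=
  Finsupp.lhom_ext' fun p => LinearMap.ext_ring (h p.1 p.2)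

lemma map_mem_of_forall_cell {M : Type*} [AddCommGroup M] [Module (ZMod 2) M]
    {φ : CellChain ι G →ₗ[ZMod 2] M} {D : Submodule (ZMod 2) M} (h : ∀ i g, φ (cell i g) ∈ D)
    (c : CellChain ι G) : φ c ∈ D := by
  suffices D.mkQ ∘ₗ φ = 0 by simpa using LinearMap.congr_fun this c
  exact linearMap_ext fun i g => by simpa using h i g

variable [Group H] [Group K]

/-- The left translation action of `H` on chains. -/
noncomputable def translate (h : H) : CellChain ι H →ₗ[ZMod 2] CellChain ι H :=
  Finsupp.lmapDomain _ _ fun p => (p.1, h * p.2)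

@[simp] lemma translate_cell (h : H) (i : ι) (g : H) :
    translate h (cell i g) = cell i (h * g) := by
  simp [translate]

@[simp] lemma translate_translate (h k : H) (c : CellChain ι H) :
    translate h (translate k c) = translate (h * k) c := by
  suffices translate h ∘ₗ translate k = translate (ι := ι) (h * k) from LinearMap.congr_fun this c
  exact linearMap_ext fun i g => by simp [mul_assoc]

@[simp] lemma translate_one (c : CellChain ι H) : translate 1 c = c := by
  suffices translate 1 = LinearMap.id (R := ZMod 2) (M := CellChain ι H) from
    LinearMap.congr_fun this c
  exact linearMap_ext fun i g => by simp

@[simp] lemma translate_apply (h : H) (c : CellChain ι H) (x : ι × H) :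
    translate h c x = c (x.1, h⁻¹ * x.2) := by
  have hinj : Function.Injective fun p : ι × H => (p.1, h * p.2) := fun p q hpq => by
    simpa [Prod.ext_iff] using hpq
  simpa [translate] using Finsupp.mapDomain_apply hinj c (x.1, h⁻¹ * x.2)

/-- A linear map between chains is controlled over `f` if it sends a cell at `g` to a chain
supported uniformly close to `f g`. -/
def IsControlled (f : G → H) (φ : CellChain ι G →ₗ[ZMod 2] CellChain ι' H) : Prop :=
  ∃ F : Set H, F.Finite ∧ ∀ i g x, φ (cell i g) x ≠ 0 → (f g)⁻¹ * x.2 ∈ F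

namespace IsControlled

lemma exists_support {f : G → H} {φ : CellChain ι G →ₗ[ZMod 2] CellChain ι' H}
    (h : IsControlled f φ) :
    ∃ F : Set H, F.Finite ∧ ∀ c x, φ c x ≠ 0 → ∃ y, c y ≠ 0 ∧ (f y.2)⁻¹ * x.2 ∈ F := by
  obtain ⟨F, hF, h⟩ := h
  refine ⟨F, hF, fun c x hx => ?_⟩
  have hsum : φ c x = c.sum fun y r => r * φ (cell y.1 y.2) x := by
    conv_lhs => rw [← c.sum_single, map_finsuppSum, Finsupp.sum, Finsupp.finsetSum_apply]
    refine Finset.sum_congr rfl fun y _ => ?_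
    beta_reduce
    rw [← smul_eq_mul, ← Finsupp.smul_apply, ← map_smul, Finsupp.smul_single_one]
  obtain ⟨y, hy, hyx⟩ := Finset.exists_ne_zero_of_sum_ne_zero (hsum ▸ hx)
  exact ⟨y, Finsupp.mem_support_iff.1 hy, h _ _ x (right_ne_zero_of_mul hyx)⟩

lemma add {f : G → H} {φ ψ : CellChain ι G →ₗ[ZMod 2] CellChain ι' H} (h : IsControlled f φ)
    (h' : IsControlled f ψ) : IsControlled f (φ + ψ) := by
  obtain ⟨F, hF, h⟩ := h
  obtain ⟨F', hF', h'⟩ := h'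
  refine ⟨F ∪ F', hF.union hF', fun i g x hx => ?_⟩
  by_cases hφ : φ (cell i g) x = 0
  · exact Or.inr (h' i g x fun hψ => hx (by simp [hφ, hψ]))
  · exact Or.inl (h i g x hφ)

lemma comp {f : G → H} {f' : H → K} {φ : CellChain ι G →ₗ[ZMod 2] CellChain ι' H}
    {ψ : CellChain ι' H →ₗ[ZMod 2] CellChain ι'' K} (h' : IsControlled f' ψ) (h : IsControlled f φ)
    (hf' : IsBornologous f') : IsControlled (fun g => f' (f g)) (ψ ∘ₗ φ) := by
  obtain ⟨F, hF, h⟩ := h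
  obtain ⟨F', hF', h'⟩ := h'.exists_support
  obtain ⟨F₂, hF₂, h₂⟩ := hf' F hF
  refine ⟨F₂ * F', hF₂.mul hF', fun i g x hx => ?_⟩
  obtain ⟨y, hy, hyx⟩ := h' _ x hx
  exact inv_mul_mem_mul (h₂ _ _ (h i g y hy)) hyx

lemma of_isCloseToId {f : H → H} {φ : CellChain ι H →ₗ[ZMod 2] CellChain ι' H}
    (h : IsControlled f φ) (hf : IsCloseToId f) : IsControlled id φ := by
  obtain ⟨F, hF, h⟩ := h
  obtain ⟨E, hE, hf⟩ := hf
  exact ⟨E * F, hE.mul hF, fun i g x hx => inv_mul_mem_mul (hf g) (h i g x hx)⟩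

lemma id : IsControlled id (LinearMap.id : CellChain ι H →ₗ[ZMod 2] CellChain ι H) := by
  classical
  refine ⟨{1}, Set.finite_singleton 1, fun i g x hx => ?_⟩
  obtain rfl : (i, g) = x := by
    by_contra hne
    simp [hne] at hx
  simp

end IsControlled

/-- The translation-equivariant linear map with prescribed values on the cells based at `1`. -/
noncomputable def equivariantMap (v : ι → CellChain ι' H) :
    CellChain ι H →ₗ[ZMod 2] CellChain ι' H :=
  Finsupp.linearCombination (ZMod 2) fun p => translate p.2 (v p.1)

lemma equivariantMap_cell (v : ι → CellChain ι' H) (i : ι) (g : H) :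
    equivariantMap v (cell i g) = translate g (v i) := by
  simp [equivariantMap]

lemma equivariantMap_translate (v : ι → CellChain ι' H) (h : H) (c : CellChain ι H) :
    equivariantMap v (translate h c) = translate h (equivariantMap v c) := by
  suffices equivariantMap v ∘ₗ translate h = translate h ∘ₗ equivariantMap v from
    LinearMap.congr_fun this c
  exact linearMap_ext fun i g => by
    simp only [LinearMap.comp_apply, translate_cell, equivariantMap_cell, translate_translate]

lemma isControlled_equivariantMap [Finite ι] (v : ι → CellChain ι' H) :
    IsControlled id (equivariantMap v) := by
  refine ⟨⋃ i, Prod.snd '' ((v i).support : Set (ι' × H)),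
    Set.finite_iUnion fun i => (Finset.finite_toSet _).image _, fun i g x hx => ?_⟩
  rw [equivariantMap_cell, translate_apply] at hx
  exact Set.mem_iUnion.2 ⟨i, (x.1, g⁻¹ * x.2), by simpa using hx, rfl⟩

lemma finite_supported [Finite ι] {F : Set G} (hF : F.Finite) :
    {z : CellChain ι G | ∀ x, z x ≠ 0 → x.2 ∈ F}.Finite := by
  have hfinite : Finite (Set.univ ×ˢ F : Set (ι × G)) := (Set.finite_univ.prod hF).to_subtype
  have : Finite ((Set.univ ×ˢ F : Set (ι × G)) →₀ ZMod 2) :=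
    Finite.of_equiv _ Finsupp.equivFunOnFinite.symm
  have : Finite (Finsupp.supported (ZMod 2) (ZMod 2) (Set.univ ×ˢ F : Set (ι × G))) :=
    Finite.of_equiv _ (Finsupp.supportedEquivFinsupp _).symm.toEquiv
  refine (Set.toFinite (Finsupp.supported (ZMod 2) (ZMod 2)
    (Set.univ ×ˢ F : Set (ι × G)) : Set (CellChain ι G))).subset fun z hz => ?_
  exact (Finsupp.mem_supported _ z).2 fun x hx => ⟨trivial, hz x (Finsupp.mem_support_iff.1 hx)⟩

-- Up to translation only finitely many chains occur as `ψ (cell i g)`, and a preimage is chosen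
-- once for each of them.
lemma exists_isControlled_lift [Finite ι'] {f : G → H} {ψ : CellChain ι G →ₗ[ZMod 2] CellChain ι' H}
    (hψ : IsControlled f ψ) {d : CellChain ι'' H →ₗ[ZMod 2] CellChain ι' H}
    (hd : ∀ h c, d (translate h c) = translate h (d c))
    (hrange : ∀ i g, ψ (cell i g) ∈ LinearMap.range d) :
    ∃ φ : CellChain ι G →ₗ[ZMod 2] CellChain ι'' H, IsControlled f φ ∧ d ∘ₗ φ = ψ := by
  obtain ⟨F, hF, hψ⟩ := hψ
  have hsection : ∀ z, ∃ u, z ∈ LinearMap.range d → d u = z := fun z => by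
    by_cases hz : z ∈ LinearMap.range d
    exacts [hz.imp fun u hu _ => hu, ⟨0, fun h => absurd h hz⟩]
  choose s hs using hsection
  let z (p : ι × G) : CellChain ι' H := translate (f p.2)⁻¹ (ψ (cell p.1 p.2))
  have hz (p : ι × G) : z p ∈ {z : CellChain ι' H | ∀ x, z x ≠ 0 → x.2 ∈ F} := fun x hx => by
    simpa using hψ p.1 p.2 (x.1, f p.2 * x.2) (by simpa [z] using hx)
  let φ : CellChain ι G →ₗ[ZMod 2] CellChain ι'' H :=
    Finsupp.linearCombination (ZMod 2) fun p => translate (f p.2) (s (z p))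
  have hφ (i : ι) (g : G) : φ (cell i g) = translate (f g) (s (z (i, g))) := by simp [φ]
  refine ⟨φ, ⟨⋃ z ∈ {z : CellChain ι' H | ∀ x, z x ≠ 0 → x.2 ∈ F},
    Prod.snd '' ((s z).support : Set (ι'' × H)), ?_, fun i g x hx => ?_⟩,
    linearMap_ext fun i g => ?_⟩
  · exact (finite_supported hF).biUnion fun z _ => (Finset.finite_toSet _).image _
  · rw [hφ, translate_apply] at hx
    exact Set.mem_biUnion (hz (i, g)) ⟨(x.1, (f g)⁻¹ * x.2), by simpa using hx, rfl⟩
  · obtain ⟨u, hu⟩ := hrange i g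
    have hdz : d (s (z (i, g))) = z (i, g) := hs _ ⟨translate (f g)⁻¹ u, by rw [hd, hu]⟩
    rw [LinearMap.comp_apply, hφ, hd, hdz, translate_translate, mul_inv_cancel, translate_one]

lemma cell_add_cell_mul_mem {D : Submodule (ZMod 2) (CellChain ι H)} {i : ι} {S : Set H}
    (hS : ∀ s ∈ S, ∀ g, cell i g + cell i (g * s) ∈ D) {x : H} (hx : x ∈ Subgroup.closure S)
    (g : H) : cell i g + cell i (g * x) ∈ D := by
  induction hx using Subgroup.closure_induction generalizing g with
  | mem s hs => exact hS s hs g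
  | one => simp [ZModModule.add_self]
  | mul x y _ _ hx hy =>
    simpa [ZModModule.add_add_add_cancel, mul_assoc] using D.add_mem (hx g) (hy (g * x))
  | inv x _ hx => simpa [add_comm] using hx (g * x⁻¹)

lemma apply_eq_zero_of_mul_right_invariant {c : CellChain ι H} {i : ι} {x : H}
    (hx : Function.Injective fun j : ℕ => x ^ j) (hc : ∀ g, c (i, g * x) = c (i, g)) (g : H) :
    c (i, g) = 0 := by
  by_contra hne
  have hpow (j : ℕ) : c (i, g * x ^ j) = c (i, g) := by
    induction j with
    | zero => simp
    | succ j ih => rw [pow_succ, ← mul_assoc, hc, ih]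
  refine Set.infinite_of_injective_forall_mem (f := fun j : ℕ => (i, g * x ^ j))
    (fun j k hjk => hx (by simpa using hjk)) (fun j => ?_) c.hasFiniteSupport
  simpa [hpow] using hne

end CellChain

namespace BS

open CellChain

variable {n : ℕ}

/-- The boundary map from edges to vertices of the Cayley graph of `BS n`: the edges of type `true`
and `false` at `g` join `g` to `g * a` and to `g * b`. -/
noncomputable def boundary₁ (n : ℕ) : CellChain Bool (BS n) →ₗ[ZMod 2] CellChain Unit (BS n) :=
  equivariantMap fun i => cell () 1 + cell () (if i then a else b)

/-- The boundary map from 2-cells to edges of the Cayley complex of `BS n`: the 2-cell at `g` is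
bounded by the path from `g` to `g * a * b = g * b ^ n * a` reading the relator `a b a⁻¹ b⁻ⁿ`. -/
noncomputable def boundary₂ (n : ℕ) : CellChain Unit (BS n) →ₗ[ZMod 2] CellChain Bool (BS n) :=
  equivariantMap fun _ =>
    cell true 1 + cell true (b ^ n) + ∑ i ∈ Finset.range n, cell false (b ^ i) + cell false a

lemma boundary₁_cell (i : Bool) (g : BS n) :
    boundary₁ n (cell i g) = cell () g + cell () (g * if i then a else b) := by
  simp [boundary₁, equivariantMap_cell]

lemma boundary₂_cell (i : Unit) (g : BS n) :
    boundary₂ n (cell i g) = cell true g + cell true (g * b ^ n) +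
      ∑ i ∈ Finset.range n, cell false (g * b ^ i) + cell false (g * a) := by
  simp [boundary₂, equivariantMap_cell]

lemma boundary₁_comp_boundary₂ : boundary₁ n ∘ₗ boundary₂ n = 0 := linearMap_ext fun i g => by
  have hpath (k : ℕ) : ∑ i ∈ Finset.range k, (cell () (g * b ^ i) + cell () (g * b ^ i * b)) =
      cell () g + cell () (g * b ^ k) := by
    induction k with
    | zero => simp [ZModModule.add_self]
    | succ k ih =>
      rw [Finset.sum_range_succ, ih, mul_assoc, ← pow_succ, ZModModule.add_add_add_cancel]
  simp only [LinearMap.comp_apply, boundary₂_cell, map_add, map_sum, boundary₁_cell, if_true,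
    Bool.false_eq_true, if_false, LinearMap.zero_apply, hpath, mul_assoc g a, a_mul_b]
  have hcancel (x y z w : CellChain Unit (BS n)) :
      x + y + (z + w) + (x + z) + (y + w) = (x + x) + (y + y) + (z + z) + (w + w) := by abel
  simp only [← mul_assoc, hcancel, ZModModule.add_self]

lemma cell_add_cell_mem_range_boundary₁ (g h : BS n) :
    cell () g + cell () h ∈ LinearMap.range (boundary₁ n) := by
  have hgen : ∀ s ∈ ({a, b} : Set (BS n)), ∀ g,
      cell () g + cell () (g * s) ∈ LinearMap.range (boundary₁ n) := by
    rintro _ (rfl | rfl) g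
    exacts [⟨cell true g, by simp [boundary₁_cell]⟩, ⟨cell false g, by simp [boundary₁_cell]⟩]
  simpa using cell_add_cell_mul_mem hgen (x := g⁻¹ * h) (by simp [closure_pair]) g

lemma boundary₁_apply (c : CellChain Bool (BS n)) (g : BS n) :
    boundary₁ n c ((), g) =
      c (true, g) + c (true, g * a⁻¹) + c (false, g) + c (false, g * b⁻¹) := by
  classical
  suffices Finsupp.lapply ((), g) ∘ₗ boundary₁ n = Finsupp.lapply (R := ZMod 2) (true, g) +
      Finsupp.lapply (true, g * a⁻¹) + Finsupp.lapply (false, g) +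
      Finsupp.lapply (false, g * b⁻¹) from LinearMap.congr_fun this c
  refine linearMap_ext fun i h => ?_
  cases i <;> simp [boundary₁_cell, Finsupp.single_apply, eq_mul_inv_iff_mul_eq]

lemma boundary₂_apply_true (u : CellChain Unit (BS n)) (g : BS n) :
    boundary₂ n u (true, g) = u ((), g) + u ((), g * (b ^ n)⁻¹) := by
  classical
  suffices Finsupp.lapply (true, g) ∘ₗ boundary₂ n = Finsupp.lapply (R := ZMod 2) ((), g) +
      Finsupp.lapply ((), g * (b ^ n)⁻¹) from LinearMap.congr_fun this u
  exact linearMap_ext fun _ h => by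
    simp [boundary₂_cell, Finsupp.single_apply, eq_mul_inv_iff_mul_eq]

/-- The sums of an edge chain over the classes of parallel edges of type `true`, an edge and its
translates by powers of `b ^ n` being parallel. -/
noncomputable def verticalSum (n : ℕ) :
    CellChain Bool (BS n) →ₗ[ZMod 2] (BS n ⧸ Subgroup.zpowers (b ^ n : BS n)) →₀ ZMod 2 :=
  Finsupp.linearCombination (ZMod 2) fun p => if p.1 then Finsupp.single ↑p.2 1 else 0

lemma add_verticalSum_mem (c : CellChain Bool (BS n)) :
    c + Finsupp.lmapDomain (ZMod 2) (ZMod 2) (fun q => (true, q.out)) (verticalSum n c) ∈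
      LinearMap.range (boundary₂ n) ⊔ Finsupp.supported (ZMod 2) (ZMod 2) {x | x.1 = false} := by
  set D : Submodule (ZMod 2) (CellChain Bool (BS n)) :=
    LinearMap.range (boundary₂ n) ⊔ Finsupp.supported (ZMod 2) (ZMod 2) {x | x.1 = false}
  have hhorizontal (g : BS n) : cell false g ∈ D :=
    Submodule.mem_sup_right (Finsupp.single_mem_supported _ _ rfl)
  have hstep : ∀ s ∈ ({b ^ n} : Set (BS n)), ∀ g, cell true g + cell true (g * s) ∈ D := by
    rintro _ rfl g
    have hcell : boundary₂ n (cell () g) ∈ D := Submodule.mem_sup_left ⟨_, rfl⟩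
    rw [boundary₂_cell, add_assoc] at hcell
    exact (D.add_mem_iff_left
      (D.add_mem (D.sum_mem fun i _ => hhorizontal _) (hhorizontal _))).1 hcell
  refine map_mem_of_forall_cell (φ := LinearMap.id + Finsupp.lmapDomain (ZMod 2) (ZMod 2)
    (fun q => (true, q.out)) ∘ₗ verticalSum n) (fun i g => ?_) c
  cases i with
  | false => simpa [verticalSum] using hhorizontal g
  | true =>
    have hparallel : g⁻¹ * (g : BS n ⧸ Subgroup.zpowers (b ^ n : BS n)).out ∈
        Subgroup.closure {b ^ n} := by
      rw [← Subgroup.zpowers_eq_closure, ← QuotientGroup.eq, QuotientGroup.out_eq']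
    simpa [verticalSum] using cell_add_cell_mul_mem hstep hparallel g

variable [NeZero n]

lemma injective_b_pow : Function.Injective fun j : ℕ => (b ^ j : BS n) := fun j k hjk => by
  simpa using congrArg offset hjk

lemma injective_boundary₂ : Function.Injective (boundary₂ n) := by
  refine (injective_iff_map_eq_zero _).2 fun u hu => Finsupp.ext fun ⟨_, g⟩ => ?_
  refine apply_eq_zero_of_mul_right_invariant (x := b ^ n) (fun j k hjk => ?_) (fun g => ?_) g
  · simp only [← pow_mul] at hjk
    exact mul_left_cancel₀ (NeZero.ne n) (injective_b_pow hjk)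
  · have hg := boundary₂_apply_true u (g * b ^ n)
    rw [hu, mul_inv_cancel_right] at hg
    exact CharTwo.add_eq_zero.1 hg.symm

lemma inv_mul_mem_zpowers_b_pow {r g : BS n} : r⁻¹ * g ∈ Subgroup.zpowers (b ^ n : BS n) ↔
    height g = height r ∧ offset g - offset r ∈ lattice n (height r + 1) := by
  have hn : (n : ℚ) ≠ 0 := NeZero.ne _
  simp only [Subgroup.mem_zpowers_iff, mem_lattice, zpow_add_one₀ hn]
  constructor
  · rintro ⟨k, hk⟩
    obtain rfl : g = r * (b ^ n) ^ k := by rw [hk, mul_inv_cancel_left]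
    refine ⟨by simp, k, ?_⟩
    rw [← zpow_natCast, ← zpow_mul, offset_mul, offset_b_zpow]
    push_cast
    ring
  · rintro ⟨hheight, k, hk⟩
    refine ⟨k, eq_inv_mul_of_mul_eq (BS.ext ?_ (by simp [hheight]))⟩
    rw [← zpow_natCast, ← zpow_mul, offset_mul, offset_b_zpow, sub_eq_iff_eq_add.1 hk.symm]
    push_cast
    ring

-- Cutting the edges parallel to one at `r` disconnects the complex: the sum of a chain over these
-- edges is the value on its boundary of the indicator function of the vertices beyond the cut.
lemma verticalSum_eq_zero {c : CellChain Bool (BS n)} (hc : boundary₁ n c = 0) :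
    verticalSum n c = 0 := by
  classical
  refine Finsupp.ext fun q => ?_
  obtain ⟨r, rfl⟩ := QuotientGroup.mk_surjective q
  let beyond : CellChain Unit (BS n) →ₗ[ZMod 2] ZMod 2 :=
    Finsupp.linearCombination (ZMod 2) fun p =>
      if height r < height p.2 ∧ offset p.2 - offset r ∈ lattice n (height r + 1) then 1 else 0
  suffices Finsupp.lapply ↑r ∘ₗ verticalSum n = beyond ∘ₗ boundary₁ n by
    simpa [hc] using LinearMap.congr_fun this c
  refine linearMap_ext fun i g => ?_
  cases i with
  | true =>
    have hcoset : (g : BS n ⧸ Subgroup.zpowers (b ^ n : BS n)) = r ↔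
        height g = height r ∧ offset g - offset r ∈ lattice n (height r + 1) := by
      rw [eq_comm, QuotientGroup.eq, inv_mul_mem_zpowers_b_pow]
    by_cases hlattice : offset g - offset r ∈ lattice n (height r + 1)
    · rcases lt_trichotomy (height g) (height r) with h | h | h
      · simp [beyond, verticalSum, boundary₁_cell, hcoset, hlattice, h.ne, h.not_gt, h.not_ge]
      · simp [beyond, verticalSum, boundary₁_cell, Finsupp.single_apply, hcoset, hlattice, h]
      · simp [beyond, verticalSum, boundary₁_cell, hcoset, hlattice, h.ne', h, h.le,
          CharTwo.add_self_eq_zero]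
    · simp [beyond, verticalSum, boundary₁_cell, hcoset, hlattice]
  | false =>
    by_cases hheight : height r < height g
    · have hstep : (n : ℚ) ^ height g ∈ lattice n (height r + 1) :=
        lattice_antitone hheight (AddSubgroup.mem_zmultiples _)
      simp [beyond, verticalSum, boundary₁_cell, add_sub_right_comm,
        AddSubgroup.add_mem_cancel_right _ hstep, CharTwo.add_self_eq_zero]
    · simp [beyond, verticalSum, boundary₁_cell, hheight]

lemma horizontal_cycle_eq_zero {c : CellChain Bool (BS n)} (hc : boundary₁ n c = 0)
    (hvertical : ∀ g, c (true, g) = 0) : c = 0 := by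
  have hhorizontal (g : BS n) : c (false, g) = 0 := by
    refine apply_eq_zero_of_mul_right_invariant injective_b_pow (fun g => ?_) g
    have hg := boundary₁_apply c (g * b)
    rw [hc, hvertical, hvertical, zero_add, zero_add, mul_inv_cancel_right] at hg
    exact CharTwo.add_eq_zero.1 hg.symm
  exact Finsupp.ext fun ⟨i, g⟩ => by cases i <;> simp [hvertical, hhorizontal]

lemma ker_boundary₁_le_range_boundary₂ :
    LinearMap.ker (boundary₁ n) ≤ LinearMap.range (boundary₂ n) := fun c hc => by
  have hsplit := add_verticalSum_mem c
  rw [verticalSum_eq_zero hc, map_zero, add_zero] at hsplit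
  obtain ⟨_, ⟨u, rfl⟩, c', hc', rfl⟩ := Submodule.mem_sup.1 hsplit
  have hcycle : boundary₁ n c' = 0 := by
    have := LinearMap.congr_fun (boundary₁_comp_boundary₂ (n := n)) u
    simpa [show boundary₁ n (boundary₂ n u) = 0 from this] using hc
  refine ⟨u, ?_⟩
  rw [horizontal_cycle_eq_zero hcycle fun g => ?_, add_zero]
  exact Finsupp.notMem_support_iff.1 fun hg => absurd (hc' hg) (by simp)

end BS

section LocallyFinite

open Filter

lemma IsEffectivelyProper.finite_setOf {G H : Type*} [Group G] [Group H] {f : G → H}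
    (hf : IsEffectivelyProper f) {F : Set H} (hF : F.Finite) (x : H) :
    {y | (f y)⁻¹ * x ∈ F}.Finite := by
  obtain hempty | ⟨y₀, hy₀⟩ := {y | (f y)⁻¹ * x ∈ F}.eq_empty_or_nonempty
  · simp [hempty]
  · obtain ⟨F', hF', h⟩ := hf _ (hF.mul hF.inv)
    refine ((Set.finite_singleton y₀).mul hF').subset fun y hy =>
      ⟨y₀, rfl, y₀⁻¹ * y, h _ _ (inv_mul_mem_mul hy₀ (inv_mul_mem_inv hy)), by simp⟩

namespace CellChain

variable {ι ι' G H α : Type*} {l : Filter α}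

/-- The linear map on chains induced by a map of base points. -/
noncomputable def pushforward (f : G → H) : CellChain ι G →ₗ[ZMod 2] CellChain ι H :=
  Finsupp.lmapDomain _ _ fun p => (p.1, f p.2)

@[simp] lemma pushforward_cell (f : G → H) (i : ι) (g : G) :
    pushforward f (cell i g) = cell i (f g) := by
  simp [pushforward]

/-- Cellwise convergence of a net of finite chains to a possibly infinite chain. -/
def ConvergesTo (l : Filter α) (z : α → CellChain ι G) (u : ι × G → ZMod 2) : Prop :=
  ∀ x, ∀ᶠ s in l, z s x = u x

lemma ConvergesTo.unique [l.NeBot] {z : α → CellChain ι G} {u v : ι × G → ZMod 2}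
    (hu : ConvergesTo l z u) (hv : ConvergesTo l z v) : u = v := funext fun x => by
  obtain ⟨s, hsu, hsv⟩ := ((hu x).and (hv x)).exists
  exact hsu.symm.trans hsv

variable [Group H]

lemma isControlled_pushforward (f : G → H) : IsControlled f (pushforward (ι := ι) f) := by
  classical
  refine ⟨{1}, Set.finite_singleton 1, fun i g x hx => ?_⟩
  obtain rfl : (i, f g) = x := by
    by_contra hne
    simp [hne] at hx
  simp

lemma ConvergesTo.map [Finite ι] [l.NeBot] {f : G → H} {φ : CellChain ι G →ₗ[ZMod 2] CellChain ι' H}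
    {F : Set H} (hφ : ∀ c x, φ c x ≠ 0 → ∃ y, c y ≠ 0 ∧ (f y.2)⁻¹ * x.2 ∈ F)
    (hf : ∀ x, {y | (f y)⁻¹ * x ∈ F}.Finite) {z : α → CellChain ι G} {u : ι × G → ZMod 2}
    (hz : ConvergesTo l z u) :
    ∃ v, ConvergesTo l (fun s => φ (z s)) v ∧
      ∀ x, v x ≠ 0 → ∃ y, u y ≠ 0 ∧ (f y.2)⁻¹ * x.2 ∈ F := by
  have hlocal (x : ι' × H) : ∀ᶠ s in l, ∀ y : ι × G, (f y.2)⁻¹ * x.2 ∈ F → z s y = u y := by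
    have hfinite : {y : ι × G | (f y.2)⁻¹ * x.2 ∈ F}.Finite :=
      (Set.finite_univ.prod (hf x.2)).subset fun y hy => ⟨trivial, hy⟩
    exact (eventually_all_finite hfinite).2 fun y _ => hz y
  choose s hs using fun x => (hlocal x).exists
  refine ⟨fun x => φ (z (s x)) x, fun x => ?_, fun x hx => ?_⟩
  · filter_upwards [hlocal x] with t ht
    rw [← sub_eq_zero, ← Finsupp.sub_apply, ← map_sub]
    by_contra hne
    obtain ⟨y, hy, hyx⟩ := hφ _ x hne
    exact hy (by rw [Finsupp.sub_apply, ht y hyx, hs x y hyx, sub_self])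
  · obtain ⟨y, hy, hyx⟩ := hφ _ x hx
    exact ⟨y, hs x y hyx ▸ hy, hyx⟩

lemma ConvergesTo.map_zero [Finite ι] [l.NeBot] {f : G → H}
    {φ : CellChain ι G →ₗ[ZMod 2] CellChain ι' H} (hφ : IsControlled f φ)
    (hf : ∀ F : Set H, F.Finite → ∀ x, {y | (f y)⁻¹ * x ∈ F}.Finite) {z : α → CellChain ι G}
    (hz : ConvergesTo l z 0) : ConvergesTo l (fun s => φ (z s)) 0 := by
  obtain ⟨F, hF, hsupport⟩ := hφ.exists_support
  obtain ⟨v, hv, hvz⟩ := hz.map hsupport (hf F hF)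
  obtain rfl : v = 0 := funext fun x => by_contra fun hx => by simpa using hvz x hx
  exact hv

end CellChain

end LocallyFinite

namespace BS

open CellChain Filter Pointwise

variable {m n : ℕ}

lemma boundary₂_apply_false (u : CellChain Unit (BS n)) (g : BS n) :
    boundary₂ n u (false, g) =
      ∑ i ∈ Finset.range n, u ((), g * (b ^ i)⁻¹) + u ((), g * a⁻¹) := by
  classical
  suffices Finsupp.lapply (false, g) ∘ₗ boundary₂ n =
      ∑ i ∈ Finset.range n, Finsupp.lapply (R := ZMod 2) ((), g * (b ^ i)⁻¹) +
        Finsupp.lapply ((), g * a⁻¹) by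
    simpa using LinearMap.congr_fun this u
  exact linearMap_ext fun _ h => by
    simp [boundary₂_cell, Finsupp.single_apply, eq_mul_inv_iff_mul_eq]

/-- Locally finite 2-cycles of the Cayley complex of `BS n`: the possibly infinite sum of the
2-cells at the points of the support of `u` has zero boundary. -/
structure IsCycle (u : BS n → ZMod 2) : Prop where
  add_mul_inv_b_pow : ∀ g, u g + u (g * (b ^ n)⁻¹) = 0
  sum_mul_inv_b_pow : ∀ g, ∑ i ∈ Finset.range n, u (g * (b ^ i)⁻¹) + u (g * a⁻¹) = 0

namespace IsCycle

lemma add {u v : BS n → ZMod 2} (hu : IsCycle u) (hv : IsCycle v) :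
    IsCycle fun g => u g + v g where
  add_mul_inv_b_pow g := by
    rw [add_add_add_comm, hu.add_mul_inv_b_pow, hv.add_mul_inv_b_pow, add_zero]
  sum_mul_inv_b_pow g := by
    rw [Finset.sum_add_distrib, add_add_add_comm, hu.sum_mul_inv_b_pow, hv.sum_mul_inv_b_pow,
      add_zero]

lemma comp_mul_left {u : BS n → ZMod 2} (hu : IsCycle u) (x : BS n) :
    IsCycle fun g => u (x * g) where
  add_mul_inv_b_pow g := by simpa only [mul_assoc] using hu.add_mul_inv_b_pow (x * g)
  sum_mul_inv_b_pow g := by simpa only [mul_assoc] using hu.sum_mul_inv_b_pow (x * g)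

lemma exists_convergesTo {u : BS n → ZMod 2} (hu : IsCycle u) :
    ∃ z : Finset (BS n) → CellChain Unit (BS n), ConvergesTo atTop z (fun x => u x.2) ∧
      ConvergesTo atTop (fun s => boundary₂ n (z s)) 0 := by
  let z (s : Finset (BS n)) : CellChain Unit (BS n) :=
    Finsupp.indicator (Finset.univ ×ˢ s) fun x _ => u x.2
  have hz (g : BS n) : ∀ᶠ s in atTop, z s ((), g) = u g := by
    filter_upwards [eventually_ge_atTop {g}] with s hs
    exact Finsupp.indicator_of_mem (by simpa using hs) _
  refine ⟨z, fun x => hz x.2, ?_⟩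
  rintro ⟨_ | _, g⟩
  · filter_upwards [hz (g * a⁻¹), (Finset.eventually_all _).2 fun i (_ : i ∈ Finset.range n) =>
      hz (g * (b ^ i)⁻¹)] with s ha hb
    rw [boundary₂_apply_false, ha, Finset.sum_congr rfl hb, hu.sum_mul_inv_b_pow, Pi.zero_apply]
  · filter_upwards [hz g, hz (g * (b ^ n)⁻¹)] with s h₁ h₂
    rw [boundary₂_apply_true, h₁, h₂, hu.add_mul_inv_b_pow, Pi.zero_apply]

lemma of_convergesTo {α : Type*} {l : Filter α} [l.NeBot] {z : α → CellChain Unit (BS n)}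
    {u : Unit × BS n → ZMod 2} (hz : ConvergesTo l z u)
    (hdz : ConvergesTo l (fun s => boundary₂ n (z s)) 0) : IsCycle fun g => u ((), g) where
  add_mul_inv_b_pow g := by
    obtain ⟨s, h₁, h₂, h₃⟩ :=
      ((hz ((), g)).and ((hz ((), g * (b ^ n)⁻¹)).and (hdz (true, g)))).exists
    rwa [boundary₂_apply_true, h₁, h₂, Pi.zero_apply] at h₃
  sum_mul_inv_b_pow g := by
    obtain ⟨s, h₁, h₂, h₃⟩ :=
      ((hz ((), g * a⁻¹)).and (((Finset.eventually_all _).2 fun i (_ : i ∈ Finset.range n) =>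
        hz ((), g * (b ^ i)⁻¹)).and (hdz (false, g)))).exists
    rwa [boundary₂_apply_false, h₁, Finset.sum_congr rfl h₂, Pi.zero_apply] at h₃

lemma apply_mul_b_zpow {u : BS n → ZMod 2} (hu : IsCycle u) (g : BS n) (k : ℤ) :
    u (g * b ^ (n * k)) = u g := by
  have hstep (g : BS n) : u (g * b ^ (n : ℤ)) = u g := by
    have := CharTwo.add_eq_zero.1 (hu.add_mul_inv_b_pow (g * b ^ n))
    rwa [mul_inv_cancel_right, ← zpow_natCast] at this
  induction k with
  | zero => simp
  | succ k ih => rw [mul_add_one, zpow_add, ← mul_assoc, hstep, ih]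
  | pred k ih => rw [← ih, ← hstep (g * b ^ (n * (-(k : ℤ) - 1))), mul_assoc, ← zpow_add,
      mul_sub_one, sub_add_cancel]

end IsCycle

variable [NeZero n]

lemma exists_chainMap {f : BS m → BS n} (hf : IsBornologous f) :
    ∃ (φ₁ : CellChain Bool (BS m) →ₗ[ZMod 2] CellChain Bool (BS n))
      (φ₂ : CellChain Unit (BS m) →ₗ[ZMod 2] CellChain Unit (BS n)),
      IsControlled f φ₁ ∧ IsControlled f φ₂ ∧
      boundary₁ n ∘ₗ φ₁ = pushforward f ∘ₗ boundary₁ m ∧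
      boundary₂ n ∘ₗ φ₂ = φ₁ ∘ₗ boundary₂ m := by
  obtain ⟨φ₁, hφ₁, h₁⟩ := exists_isControlled_lift (d := boundary₁ n)
    ((isControlled_pushforward f).comp (isControlled_equivariantMap _) hf)
    (equivariantMap_translate _) (ψ := pushforward f ∘ₗ boundary₁ m) fun i g => by
      simpa [boundary₁_cell] using cell_add_cell_mem_range_boundary₁ _ _
  obtain ⟨φ₂, hφ₂, h₂⟩ := exists_isControlled_lift (d := boundary₂ n)
    (hφ₁.comp (isControlled_equivariantMap _) hf)
    (equivariantMap_translate _) (ψ := φ₁ ∘ₗ boundary₂ m) fun i g => by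
      refine ker_boundary₁_le_range_boundary₂ (LinearMap.mem_ker.2 ?_)
      change ((boundary₁ n ∘ₗ φ₁) ∘ₗ boundary₂ m) _ = 0
      rw [h₁, LinearMap.comp_assoc, boundary₁_comp_boundary₂, LinearMap.comp_zero,
        LinearMap.zero_apply]
  exact ⟨φ₁, φ₂, hφ₁, hφ₂, h₁, h₂⟩

variable [NeZero m]

-- The chain homotopy `ψ₂ ∘ φ₂ ≃ id` has no term in degree 2, since there are no 3-cells.
lemma exists_chainHomotopy {f : BS m → BS n} {f' : BS n → BS m} (h : CoarseEquiv f f') :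
    ∃ (φ₁ : CellChain Bool (BS m) →ₗ[ZMod 2] CellChain Bool (BS n))
      (φ₂ : CellChain Unit (BS m) →ₗ[ZMod 2] CellChain Unit (BS n))
      (ψ₂ : CellChain Unit (BS n) →ₗ[ZMod 2] CellChain Unit (BS m))
      (κ : CellChain Bool (BS m) →ₗ[ZMod 2] CellChain Unit (BS m)),
      IsControlled f φ₁ ∧ IsControlled f φ₂ ∧ IsControlled f' ψ₂ ∧ IsControlled id κ ∧
      boundary₂ n ∘ₗ φ₂ = φ₁ ∘ₗ boundary₂ m ∧
      ψ₂ ∘ₗ φ₂ = LinearMap.id + κ ∘ₗ boundary₂ m := by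
  have hid : IsBornologous (id : BS m → BS m) := .of_monoidHom (.id _)
  obtain ⟨φ₁, φ₂, hφ₁, hφ₂, h₁, h₂⟩ := exists_chainMap h.bornologous
  obtain ⟨ψ₁, ψ₂, hψ₁, hψ₂, h₁', h₂'⟩ := exists_chainMap h.bornologous'
  obtain ⟨κ₀, hκ₀, hκ₀d⟩ := exists_isControlled_lift (d := boundary₁ m)
    ((((isControlled_pushforward f').comp (isControlled_pushforward f)
      h.bornologous').of_isCloseToId h.close).add .id)
    (equivariantMap_translate _) fun i g => by
      simpa using cell_add_cell_mem_range_boundary₁ _ _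
  obtain ⟨κ, hκ, hκd⟩ := exists_isControlled_lift (d := boundary₂ m)
    ((((hψ₁.comp hφ₁ h.bornologous').of_isCloseToId h.close).add .id).add
      (hκ₀.comp (isControlled_equivariantMap _) hid))
    (equivariantMap_translate _) (ψ := ψ₁ ∘ₗ φ₁ + LinearMap.id + κ₀ ∘ₗ boundary₁ m) fun i g => by
      refine ker_boundary₁_le_range_boundary₂ (LinearMap.mem_ker.2 ?_)
      have h₁c := LinearMap.congr_fun h₁ (cell i g)
      have h₁'c := LinearMap.congr_fun h₁' (φ₁ (cell i g))
      have hκc := LinearMap.congr_fun hκ₀d (boundary₁ m (cell i g))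
      simp only [LinearMap.comp_apply, LinearMap.add_apply, LinearMap.id_apply] at h₁c h₁'c hκc ⊢
      rw [map_add, map_add, hκc, h₁'c, h₁c]
      exact ZModModule.add_self _
  refine ⟨φ₁, φ₂, ψ₂, κ, hφ₁, hφ₂, hψ₂, hκ, h₂, LinearMap.ext fun c => injective_boundary₂ ?_⟩
  have h₂c := LinearMap.congr_fun h₂ c
  have h₂'c := LinearMap.congr_fun h₂' (φ₂ c)
  have hκc := LinearMap.congr_fun hκd (boundary₂ m c)
  have hdd := LinearMap.congr_fun (boundary₁_comp_boundary₂ (n := m)) c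
  simp only [LinearMap.comp_apply, LinearMap.add_apply, LinearMap.id_apply,
    LinearMap.zero_apply] at h₂c h₂'c hκc hdd ⊢
  rw [map_add, hκc, hdd, map_zero, add_zero, h₂'c, h₂c, add_left_comm, ZModModule.add_self,
    add_zero]

lemma exists_image_cycle {f : BS m → BS n} {f' : BS n → BS m} (h : CoarseEquiv f f') :
    ∃ (F : Set (BS n)) (F' : Set (BS m)), F.Finite ∧ F'.Finite ∧ ∀ u : BS m → ZMod 2, IsCycle u →
      ∃ v : BS n → ZMod 2, IsCycle v ∧ (∀ w, v w ≠ 0 → ∃ y, u y ≠ 0 ∧ (f y)⁻¹ * w ∈ F) ∧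
        ∀ p, u p ≠ 0 → ∃ w, v w ≠ 0 ∧ (f' w)⁻¹ * p ∈ F' := by
  obtain ⟨φ₁, φ₂, ψ₂, κ, hφ₁, hφ₂, hψ₂, hκ, hφ, hψφ⟩ := exists_chainHomotopy h
  obtain ⟨F, hF, hFφ⟩ := hφ₂.exists_support
  obtain ⟨F', hF', hFψ⟩ := hψ₂.exists_support
  have hf (E : Set (BS n)) (hE : E.Finite) := h.isEffectivelyProper.finite_setOf hE
  have hf' (E : Set (BS m)) (hE : E.Finite) := h.symm.isEffectivelyProper.finite_setOf hE
  refine ⟨F, F', hF, hF', fun u hu => ?_⟩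
  obtain ⟨z, hz, hdz⟩ := hu.exists_convergesTo
  obtain ⟨v, hv, hvu⟩ := hz.map hFφ (hf F hF)
  obtain ⟨u', hu', hu'v⟩ := hv.map hFψ (hf' F' hF')
  have hdv : ConvergesTo atTop (fun s => boundary₂ n (φ₂ (z s))) 0 := by
    have := hdz.map_zero hφ₁ hf
    simp_rw [← LinearMap.comp_apply] at this ⊢
    rwa [hφ]
  obtain rfl : u' = fun x => u x.2 := hu'.unique fun x => by
    have hκz := hdz.map_zero hκ (fun E hE => (IsEffectivelyProper.of_injective (f := .id _)
      Function.injective_id).finite_setOf hE) x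
    filter_upwards [hz x, hκz] with s hzs hκs
    have := LinearMap.congr_fun hψφ (z s)
    simp only [LinearMap.comp_apply, LinearMap.add_apply, LinearMap.id_apply] at this
    rw [this, Finsupp.add_apply, hκs, hzs, Pi.zero_apply, add_zero]
  refine ⟨fun w => v ((), w), .of_convergesTo hv hdv, fun w hw => ?_, fun p hp => ?_⟩
  · obtain ⟨y, hy⟩ := hvu _ hw
    exact ⟨y.2, hy⟩
  · obtain ⟨w, hw⟩ := hu'v ((), p) hp
    exact ⟨w.2, hw⟩

lemma exists_image_line_near_cycle {f : BS m → BS n} {f' : BS n → BS m} (h : CoarseEquiv f f') :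
    ∃ F : Set (BS m), F.Finite ∧ ∀ u : BS m → ZMod 2, IsCycle u → ∀ p, u p ≠ 0 →
      ∃ w, (f' w)⁻¹ * p ∈ F ∧ ∀ k : ℤ, ∃ y, u y ≠ 0 ∧ y⁻¹ * f' (w * b ^ (n * k)) ∈ F := by
  obtain ⟨F, F', hF, hF', himage⟩ := exists_image_cycle h
  obtain ⟨E, hE, hEF⟩ := h.bornologous' F hF
  obtain ⟨B, hB, hBf⟩ := h.close
  refine ⟨F' ∪ B * E, hF'.union (hB.mul hE), fun u hu p hp => ?_⟩
  obtain ⟨v, hv, hvu, huv⟩ := himage u hu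
  obtain ⟨w, hw, hwp⟩ := huv p hp
  refine ⟨w, .inl hwp, fun k => ?_⟩
  obtain ⟨y, hy, hyw⟩ := hvu (w * b ^ (n * k)) (by rwa [hv.apply_mul_b_zpow])
  exact ⟨y, hy, .inr (inv_mul_mem_mul (hBf y) (hEF _ _ hyw))⟩

end BS

namespace BS

open Pointwise

section Planes

variable {n : ℕ}

lemma le_zero_of_one_mem_lattice (hn : 2 ≤ n) {k : ℤ} (h : 1 ∈ lattice n k) : k ≤ 0 := by
  by_contra! hk
  have : NeZero n := ⟨by omega⟩
  have hdvd : (n : ℤ) ∣ 1 :=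
    intCast_mul_zpow_mem_lattice_succ (k := 0).1 (by simpa using lattice_antitone (n := n) hk h)
  have := Int.le_of_dvd one_pos hdvd
  omega

variable [NeZero n]

open Classical in
/-- The mod 2 fundamental cycle of the plane that contains the axis of `a`: its 2-cells are the
ones at height `h` and with offset in `n ^ (h + 1) * ℤ`. -/
noncomputable def plane (g : BS n) : ZMod 2 :=
  if offset g ∈ lattice n (height g + 1) then 1 else 0

lemma plane_ne_zero {g : BS n} : plane g ≠ 0 ↔ offset g ∈ lattice n (height g + 1) := by
  simp [plane]

lemma plane_one : plane (1 : BS n) = 1 := by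
  simp [plane, zero_mem]

lemma isCycle_plane : IsCycle (plane (n := n)) where
  add_mul_inv_b_pow g := by
    have hshift : (n : ℚ) ^ height g * n ∈ lattice n (height g + 1) :=
      mem_lattice.2 ⟨1, by rw [Int.cast_one, one_mul, zpow_add_one₀ (NeZero.ne _)]⟩
    have hinvariant : plane (g * (b ^ n)⁻¹) = plane g := by
      unfold plane
      congr 1
      simp [add_mem_cancel_right, hshift]
    rw [hinvariant, CharTwo.add_self_eq_zero]
  sum_mul_inv_b_pow g := by
    classical
    have hcell (i : ℕ) : plane (g * (b ^ i)⁻¹) =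
        if offset g - i * (n : ℚ) ^ height g ∈ lattice n (height g + 1) then 1 else 0 := by
      simp [plane, sub_eq_add_neg, mul_comm]
    have hbelow : plane (g * a⁻¹) = if offset g ∈ lattice n (height g) then 1 else 0 := by
      simp [plane]
    simp_rw [hcell, hbelow, sum_range_ite_mem_lattice, CharTwo.add_self_eq_zero]

/-- The sum of `plane` and its translate by `b`. They agree below height `0` and are disjoint
above it, so this is a plane made of two upper half planes. -/
noncomputable def upperPlane (g : BS n) : ZMod 2 := plane g + plane (b⁻¹ * g)

lemma isCycle_upperPlane : IsCycle (upperPlane (n := n)) :=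
  isCycle_plane.add (isCycle_plane.comp_mul_left _)

lemma upperPlane_one_ne_zero (hn : 2 ≤ n) : upperPlane (1 : BS n) ≠ 0 := by
  have hplane : plane (b⁻¹ : BS n) = 0 := by
    by_contra h
    have hmem := le_zero_of_one_mem_lattice hn (k := 1) (by simpa using plane_ne_zero.1 h)
    omega
  simp [upperPlane, plane_one, hplane]

lemma height_nonneg_of_upperPlane_ne_zero {g : BS n} (h : upperPlane g ≠ 0) : 0 ≤ height g := by
  by_contra! hg
  have hone : (1 : ℚ) ∈ lattice n (height g + 1) :=
    lattice_antitone (show height g + 1 ≤ 0 by omega) (mod_cast intCast_mem_lattice_zero 1)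
  have hinvariant : plane (b⁻¹ * g) = plane g := by
    unfold plane
    congr 1
    simp [add_mem_cancel_left, hone]
  exact h (by rw [upperPlane, hinvariant, CharTwo.add_self_eq_zero])

/-- Far up, the two translates of `plane` diverge, and `upperPlane` does not reach far down. -/
lemma exists_support_mul_inter_subset (hn : 2 ≤ n) {F : Set (BS n)} (hF : F.Finite) :
    ∃ E : Set (BS n), E.Finite ∧ ∀ g ∈ Function.support plane * F,
      b⁻¹ * g ∈ Function.support plane * F → g ∈ Function.support upperPlane * F →
      g ∈ (Subgroup.zpowers (b : BS n) : Set (BS n)) * E := by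
  obtain ⟨C, hFC⟩ := exists_subset_box hF
  have hoffset : ∀ g ∈ Function.support plane * F, offset g ∈ lattice n (height g - 2 * C) := by
    rintro _ ⟨y, hy, e, he, rfl⟩
    obtain ⟨hheight, -, hlattice⟩ := hFC he
    rw [abs_le] at hheight
    simp only [offset_mul, height_mul]
    exact add_mem (lattice_antitone (by omega) (plane_ne_zero.1 hy))
      (lattice_antitone (by omega) ((zpow_mul_mem_lattice (height y)).2 hlattice))
  refine ⟨box n (3 * C + 1), finite_box _, fun g hg hbg hupper => ?_⟩
  have hle : height g ≤ 2 * C := by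
    have hone := sub_mem (hoffset g hg) (by simpa using hoffset _ hbg)
    have := le_zero_of_one_mem_lattice hn (by simpa using hone)
    omega
  have hge : -C ≤ height g := by
    obtain ⟨y, hy, e, he, rfl⟩ := hupper
    have hy := height_nonneg_of_upperPlane_ne_zero hy
    have he := abs_le.1 (hFC he).1
    rw [height_mul]
    omega
  refine ⟨b ^ ⌊offset g⌋, ⟨_, rfl⟩, (b ^ ⌊offset g⌋)⁻¹ * g, ⟨?_, ?_, ?_⟩, by simp⟩
  · rw [abs_le]
    simp
    omega
  · have hfract : offset ((b ^ ⌊offset g⌋)⁻¹ * g) = Int.fract (offset g) := by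
      simp [neg_add_eq_sub]
    rw [hfract, abs_of_nonneg (Int.fract_nonneg _)]
    push_cast
    linarith [Int.fract_lt_one (offset g), (C.cast_nonneg : (0 : ℚ) ≤ C)]
  · simpa [neg_add_eq_sub] using sub_mem (lattice_antitone (by omega) (hoffset g hg))
      (lattice_antitone (by omega) (intCast_mem_lattice_zero ⌊offset g⌋))

end Planes

section Lines

variable {m n : ℕ}

section Slide

variable [NeZero n]

lemma exists_finite_b_zpow_inv_mul_mul_b_zpow_mem (d : BS n) :
    ∃ F : Set (BS n), F.Finite ∧ ∀ k : ℤ, ∃ j : ℤ, (b ^ k)⁻¹ * (d * b ^ (n * j)) ∈ F := by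
  obtain ⟨C, hheight, hoffset, hlattice⟩ := exists_mem_box d
  obtain ⟨c, hc⟩ := exists_nat_ge ((n : ℚ) ^ height d * n)
  have hpos : 0 < (n : ℚ) ^ height d * n := by have := NeZero.pos n; positivity
  refine ⟨box n (C + c), finite_box _, fun k => ⟨⌊k / ((n : ℚ) ^ height d * n)⌋, ?_⟩⟩
  set j := ⌊k / ((n : ℚ) ^ height d * n)⌋ with hj
  have hj_le := (le_div_iff₀ hpos).1 (Int.floor_le (k / ((n : ℚ) ^ height d * n)))
  have hlt_j := (div_lt_iff₀ hpos).1 (Int.lt_floor_add_one (k / ((n : ℚ) ^ height d * n)))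
  rw [← hj] at hj_le hlt_j
  rw [abs_le] at hheight hoffset
  have heq : offset ((b ^ k)⁻¹ * (d * b ^ (n * j))) =
      offset d + (n : ℚ) ^ height d * (n * j : ℤ) - k := by
    simp
    ring
  refine ⟨?_, ?_, ?_⟩
  · simp [abs_le]
    omega
  · rw [heq, abs_le]
    push_cast
    constructor <;> linarith
  · rw [heq]
    exact sub_mem (add_mem (lattice_antitone (by omega) hlattice) (lattice_antitone (by omega)
      ((zpow_mul_mem_lattice (height d)).2 (intCast_mem_lattice_zero (n * j)))))
      (lattice_antitone (by omega) (intCast_mem_lattice_zero k))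

lemma exists_finite_slide {D : Set (BS n)} (hD : D.Finite) :
    ∃ F : Set (BS n), F.Finite ∧ ∀ w w', w⁻¹ * w' ∈ D →
      ∀ k : ℤ, ∃ j : ℤ, (w * b ^ k)⁻¹ * (w' * b ^ (n * j)) ∈ F := by
  choose F hF hslide using exists_finite_b_zpow_inv_mul_mul_b_zpow_mem (n := n)
  refine ⟨⋃ d ∈ D, F d, hD.biUnion fun d _ => hF d, fun w w' hw k => ?_⟩
  obtain ⟨j, hj⟩ := hslide (w⁻¹ * w') k
  exact ⟨j, Set.mem_biUnion hw (by simpa [mul_assoc] using hj)⟩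

end Slide

variable [NeZero m] [NeZero n] {f : BS m → BS n} {f' : BS n → BS m}

lemma exists_image_line_mem_support_mul (h : CoarseEquiv f f') {K : Set (BS m)} (hK : K.Finite) :
    ∃ F : Set (BS m), F.Finite ∧ ∀ u : BS m → ZMod 2, IsCycle u → u 1 ≠ 0 →
      ∀ p w, (f' w)⁻¹ * p ∈ K → ∀ k : ℤ, p⁻¹ * f' (w * b ^ k) ∈ Function.support u * F := by
  obtain ⟨F, hF, hline⟩ := exists_image_line_near_cycle h
  obtain ⟨D, hD, hKD⟩ := h.symm.isEffectivelyProper (K * F⁻¹) (hK.mul hF.inv)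
  obtain ⟨S, hS, hslide⟩ := exists_finite_slide hD
  obtain ⟨E, hE, hSE⟩ := h.bornologous' _ hS.inv
  refine ⟨F * E, hF.mul hE, fun u hu hone p w hpw k => ?_⟩
  obtain ⟨w', hw', hline⟩ := hline _ (hu.comp_mul_left p⁻¹) p (by simpa using hone)
  obtain ⟨j, hj⟩ := hslide w w' (hKD _ _ (inv_mul_mem_mul hpw (inv_mul_mem_inv hw'))) k
  obtain ⟨y, hy, hyF⟩ := hline j
  have hyE := inv_mul_mem_mul hyF (hSE _ _ (inv_mul_mem_inv hj))
  exact ⟨p⁻¹ * y, hy, _, hyE, by simp [mul_assoc]⟩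

/-- The image of a line is close to two planes with diverging upper halves and to an upper half
plane, hence to the line in which they meet. -/
lemma exists_image_line_mem_zpowers_mul (h : CoarseEquiv f f') (hm : 2 ≤ m) :
    ∃ E : Set (BS m), E.Finite ∧ ∀ w (k : ℤ),
      (f' w)⁻¹ * f' (w * b ^ k) ∈ (Subgroup.zpowers (b : BS m) : Set (BS m)) * E := by
  obtain ⟨F, hF, hline⟩ := exists_image_line_mem_support_mul h
    ((Set.finite_singleton (b : BS m)).insert 1)
  obtain ⟨E, hE, hinter⟩ := exists_support_mul_inter_subset hm hF
  have hplane : plane (1 : BS m) ≠ 0 := by simp [plane_one]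
  refine ⟨E, hE, fun w k => hinter _ ?_ ?_ ?_⟩
  · exact hline _ isCycle_plane hplane _ _ (by simp) _
  · have htranslate := hline _ isCycle_plane hplane (f' w * b) w (by simp) k
    rwa [mul_inv_rev, mul_assoc] at htranslate
  · exact hline _ isCycle_upperPlane (upperPlane_one_ne_zero hm) _ _ (by simp) _

end Lines

end BS

namespace BS

section LineGrowth

open Pointwise

variable {m n : ℕ} [NeZero n]

lemma abs_offset_mul_le {g : BS n} {C : ℕ} (hg : |height g| ≤ C) (h : BS n) :
    |offset (g * h)| ≤ |offset g| + (n : ℚ) ^ C * |offset h| := by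
  have hn : (1 : ℚ) ≤ n := mod_cast NeZero.one_le
  rw [offset_mul]
  refine (abs_add_le _ _).trans ?_
  rw [abs_mul, abs_of_pos (zpow_pos (zero_lt_one.trans_le hn) _), ← zpow_natCast]
  gcongr
  exact (abs_le.1 hg).2

variable [NeZero m] {f : BS m → BS n} {f' : BS n → BS m}

lemma exists_abs_height_image_line_le (h : CoarseEquiv f f') (hn : 2 ≤ n) :
    ∃ C : ℕ, ∀ p (k : ℤ), |height ((f p)⁻¹ * f (p * b ^ k))| ≤ C := by
  obtain ⟨E, hE, hline⟩ := exists_image_line_mem_zpowers_mul h.symm hn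
  obtain ⟨C, hC⟩ := exists_subset_box hE
  refine ⟨C, fun p k => ?_⟩
  obtain ⟨_, ⟨j, rfl⟩, e, he, heq⟩ := hline p k
  simpa [← heq] using (hC he).1

lemma exists_abs_offset_image_line_le (h : CoarseEquiv f f') (hn : 2 ≤ n) :
    ∃ C : ℕ, ∀ p (k : ℤ), |offset ((f p)⁻¹ * f (p * b ^ k))| ≤ C * |(k : ℚ)| := by
  obtain ⟨C, hC⟩ := exists_abs_height_image_line_le h hn
  obtain ⟨F, hF, hfF⟩ := h.bornologous {b, b⁻¹} (by simp)
  obtain ⟨c, hc⟩ := exists_subset_box hF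
  have hray (p : BS m) (ε : ℤ) (hε : b ^ ε ∈ ({b, b⁻¹} : Set (BS m))) (k : ℕ) :
      |offset ((f p)⁻¹ * f (p * b ^ (ε * k)))| ≤ n ^ C * c * k := by
    induction k with
    | zero => simp
    | succ k ih =>
      have hstep := hfF (p * b ^ (ε * k)) (p * b ^ (ε * k) * b ^ ε) (by rwa [inv_mul_cancel_left])
      have hmul : p * b ^ (ε * ((k + 1 : ℕ) : ℤ)) = p * b ^ (ε * k) * b ^ ε := by
        push_cast
        rw [mul_add_one, zpow_add, mul_assoc]
      calc |offset ((f p)⁻¹ * f (p * b ^ (ε * ((k + 1 : ℕ) : ℤ))))|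
          = |offset ((f p)⁻¹ * f (p * b ^ (ε * k)) *
              ((f (p * b ^ (ε * k)))⁻¹ * f (p * b ^ (ε * k) * b ^ ε)))| := by rw [hmul]; group
        _ ≤ n ^ C * c * k + n ^ C * c :=
            (abs_offset_mul_le (hC p _) _).trans (by gcongr; exact (hc hstep).2.1)
        _ = n ^ C * c * (k + 1 : ℕ) := by push_cast; ring
  refine ⟨n ^ C * c, fun p k => ?_⟩
  obtain ⟨k, rfl | rfl⟩ := k.eq_nat_or_neg
  · simpa using hray p 1 (by simp) k
  · simpa using hray p (-1) (by simp) k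

lemma exists_abs_le_abs_offset_image_line (h : CoarseEquiv f f') (hm : 2 ≤ m) (hn : 2 ≤ n) :
    ∃ C c : ℕ, ∀ p (k : ℤ), |(k : ℚ)| ≤ C * |offset ((f p)⁻¹ * f (p * b ^ k))| + c := by
  obtain ⟨E, hE, hline⟩ := exists_image_line_mem_zpowers_mul h.symm hn
  obtain ⟨c₀, hc₀⟩ := exists_subset_box hE
  obtain ⟨B, hB, hBf⟩ := h.close
  obtain ⟨F, hF, hEF⟩ := h.bornologous' _ hE
  obtain ⟨c₁, hc₁⟩ := exists_subset_box hB
  obtain ⟨c₂, hc₂⟩ := exists_subset_box (hF.mul hB.inv)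
  obtain ⟨C₁, hC₁⟩ := exists_abs_height_image_line_le h.symm hm
  obtain ⟨C₂, hC₂⟩ := exists_abs_offset_image_line_le h.symm hm
  refine ⟨m ^ c₁ * C₂, c₁ + m ^ c₁ * (C₂ * c₀ + m ^ C₁ * c₂), fun p k => ?_⟩
  obtain ⟨_, ⟨j, rfl⟩, e, he, heq⟩ := hline p k
  simp only at heq
  have hj : |(j : ℚ)| ≤ |offset ((f p)⁻¹ * f (p * b ^ k))| + c₀ := by
    have hsub : (j : ℚ) = offset ((f p)⁻¹ * f (p * b ^ k)) - offset e := by simp [← heq]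
    rw [hsub]
    exact (abs_sub _ _).trans (by gcongr; exact (hc₀ he).2.1)
  -- `b ^ k` is the product of three factors, the middle one on the image of a line under `f'`
  have hfactor : p⁻¹ * f' (f p) * ((f' (f p))⁻¹ * f' (f p * b ^ j) *
      ((f' (f p * b ^ j))⁻¹ * (p * b ^ k))) = b ^ k := by group
  have hlast : (f' (f p * b ^ j))⁻¹ * (p * b ^ k) ∈ F * B⁻¹ := by
    refine inv_mul_mem_mul (hEF _ _ ?_) (inv_mul_mem_inv (hBf _))
    rwa [mul_inv_rev, mul_assoc, ← heq, inv_mul_cancel_left]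
  calc |(k : ℚ)| = |offset (b ^ k : BS m)| := by simp
    _ ≤ c₁ + m ^ c₁ * (C₂ * |(j : ℚ)| + m ^ C₁ * c₂) := by
      rw [← hfactor]
      refine (abs_offset_mul_le (hc₁ (hBf p)).1 _).trans ?_
      gcongr
      · exact (hc₁ (hBf p)).2.1
      refine (abs_offset_mul_le (hC₁ _ _) _).trans ?_
      gcongr
      · exact hC₂ _ _
      · exact (hc₂ hlast).2.1
    _ ≤ c₁ + m ^ c₁ * (C₂ * (|offset ((f p)⁻¹ * f (p * b ^ k))| + c₀) + m ^ C₁ * c₂) := by gcongr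
    _ = _ := by push_cast; ring

end LineGrowth

end BS

section HeightDistortion

lemma le_of_forall_mul_natCast_le_mul_natCast_add {K : Type*} [Field K] [LinearOrder K]
    [IsStrictOrderedRing K] [Archimedean K] {x y c : K} (h : ∀ j : ℕ, x * j ≤ y * j + c) :
    x ≤ y := by
  by_contra! hlt
  obtain ⟨j, hj⟩ := exists_nat_gt (c / (x - y))
  rw [div_lt_iff₀ (sub_pos.2 hlt)] at hj
  linarith [h j]

namespace BS

variable {m n : ℕ} [NeZero m] [NeZero n] {f : BS m → BS n} {f' : BS n → BS m}

/-- The lines through `p` and `p * a ^ s` are at bounded distance, the latter being traversed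
`m ^ s` times faster, so the same is true of their images. -/
lemma exists_abs_offset_image_line_sub_le (h : CoarseEquiv f f') (hn : 2 ≤ n) (p : BS m)
    (s : ℕ) : ∃ E : ℚ, ∀ j : ℕ, |offset ((f p)⁻¹ * f (p * b ^ (m ^ s * j : ℤ))) -
      (n : ℚ) ^ height ((f p)⁻¹ * f (p * a ^ s)) *
        offset ((f (p * a ^ s))⁻¹ * f (p * a ^ s * b ^ (j : ℤ)))| ≤ E := by
  obtain ⟨C, hC⟩ := exists_abs_height_image_line_le h hn
  obtain ⟨F, hF, hfF⟩ := h.bornologous {a ^ s} (Set.finite_singleton _)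
  obtain ⟨c, hc⟩ := exists_subset_box hF
  set g := (f p)⁻¹ * f (p * a ^ s)
  have hn1 : (1 : ℚ) ≤ n := mod_cast NeZero.one_le
  refine ⟨|offset g| + n ^ C * c, fun j => ?_⟩
  have hstep := hfF (p * b ^ (m ^ s * j : ℤ)) (p * b ^ (m ^ s * j : ℤ) * a ^ s)
    (inv_mul_cancel_left _ _)
  rw [mul_assoc p _ (a ^ s), ← a_pow_mul_b_zpow, ← mul_assoc] at hstep
  set x := (f p)⁻¹ * f (p * b ^ (m ^ s * j : ℤ)) with hx
  set y := (f (p * a ^ s))⁻¹ * f (p * a ^ s * b ^ (j : ℤ)) with hy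
  set e := (f (p * b ^ (m ^ s * j : ℤ)))⁻¹ * f (p * a ^ s * b ^ (j : ℤ)) with he
  have hsquare : g * y = x * e := by simp only [g, hx, hy, he]; group
  have hoffset := congrArg offset hsquare
  simp only [offset_mul g, offset_mul x] at hoffset
  rw [show offset x - (n : ℚ) ^ height g * offset y =
    offset g - (n : ℚ) ^ height x * offset e by linarith]
  refine (abs_sub _ _).trans (add_le_add_right ?_ _)
  rw [abs_mul, abs_of_pos (zpow_pos (zero_lt_one.trans_le hn1) _), ← zpow_natCast]
  gcongr
  exacts [(abs_le.1 (hC _ _)).2, (hc hstep).2.1]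

lemma exists_zpow_height_image_vertical_le (h : CoarseEquiv f f') (hm : 2 ≤ m) (hn : 2 ≤ n) :
    ∃ B : ℚ, 0 < B ∧ ∀ p (s : ℕ),
      (n : ℚ) ^ height ((f p)⁻¹ * f (p * a ^ s)) ≤ B * (m : ℚ) ^ s ∧
      (m : ℚ) ^ s ≤ B * (n : ℚ) ^ height ((f p)⁻¹ * f (p * a ^ s)) := by
  obtain ⟨A, hA⟩ := exists_abs_offset_image_line_le h hn
  obtain ⟨C, c, hC⟩ := exists_abs_le_abs_offset_image_line h hm hn
  refine ⟨C * A + 1, by positivity, fun p s => ?_⟩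
  obtain ⟨E, hE⟩ := exists_abs_offset_image_line_sub_le h hn p s
  set N : ℚ := (n : ℚ) ^ height ((f p)⁻¹ * f (p * a ^ s))
  set M : ℚ := (m : ℚ) ^ s
  have hN : 0 < N := by have := NeZero.pos n; positivity
  have hM : 0 < M := by have := NeZero.pos m; positivity
  have hx (j : ℕ) := hA p (m ^ s * j)
  have hx' (j : ℕ) := hC p (m ^ s * j)
  have hy (j : ℕ) := hA (p * a ^ s) j
  have hy' (j : ℕ) := hC (p * a ^ s) j
  simp only [Int.cast_mul, Int.cast_pow, Int.cast_natCast, abs_mul, abs_pow, Nat.abs_cast]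
    at hx hx' hy hy'
  have hxy (j : ℕ) := (abs_sub_abs_le_abs_sub _ _).trans (hE j)
  have hyx (j : ℕ) := (abs_sub_abs_le_abs_sub _ _).trans ((abs_sub_comm _ _).trans_le (hE j))
  simp only [abs_mul, abs_of_pos hN] at hxy hyx
  have hupper : N ≤ C * A * M := by
    refine le_of_forall_mul_natCast_le_mul_natCast_add (c := C * E + N * c) fun j => ?_
    linarith [mul_le_mul_of_nonneg_left (hy' j) hN.le,
      mul_le_mul_of_nonneg_left (hyx j) (Nat.cast_nonneg (α := ℚ) C),
      mul_le_mul_of_nonneg_left (hx j) (Nat.cast_nonneg (α := ℚ) C)]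
  have hlower : M ≤ C * A * N := by
    refine le_of_forall_mul_natCast_le_mul_natCast_add (c := C * E + c) fun j => ?_
    linarith [hx' j, mul_le_mul_of_nonneg_left (hxy j) (Nat.cast_nonneg (α := ℚ) C),
      mul_le_mul_of_nonneg_left (hy j) (mul_nonneg (Nat.cast_nonneg (α := ℚ) C) hN.le)]
  exact ⟨hupper.trans (by linarith), hlower.trans (by linarith)⟩

lemma exists_abs_height_image_vertical_sub_le (h : CoarseEquiv f f') (hm : 2 ≤ m) (hn : 2 ≤ n) :
    ∃ C : ℝ, ∀ p (s : ℤ), |height (f (p * a ^ s)) - height (f p) - Real.logb n m * s| ≤ C := by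
  obtain ⟨B, hB, hBf⟩ := exists_zpow_height_image_vertical_le h hm hn
  have hup (p : BS m) (s : ℕ) :
      |height (f (p * a ^ s)) - height (f p) - Real.logb n m * s| ≤ Real.logb n B := by
    obtain ⟨hupper, hlower⟩ := hBf p s
    rify at hB hupper hlower
    simp only [← Real.rpow_intCast] at hupper hlower
    have hm0 : 0 < (m : ℝ) ^ s := pow_pos (by norm_cast; omega) _
    have hn1 : 1 < (n : ℝ) := by norm_cast
    have hN : 0 < (n : ℝ) ^ (height ((f p)⁻¹ * f (p * a ^ s)) : ℝ) :=
      Real.rpow_pos_of_pos (by linarith) _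
    have hlog_upper := Real.logb_le_logb_of_le hn1 hN hupper
    have hlog_lower := Real.logb_le_logb_of_le hn1 hm0 hlower
    rw [Real.logb_mul hB.ne' hm0.ne', Real.logb_pow, Real.logb_rpow (by linarith) hn1.ne']
      at hlog_upper
    rw [Real.logb_mul hB.ne' hN.ne', Real.logb_pow, Real.logb_rpow (by linarith) hn1.ne']
      at hlog_lower
    simp only [height_mul, height_inv, Int.cast_add, Int.cast_neg] at hlog_upper hlog_lower
    rw [abs_le]
    constructor <;> linarith
  refine ⟨Real.logb n B, fun p s => ?_⟩
  obtain ⟨s, rfl | rfl⟩ := s.eq_nat_or_neg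
  · simpa using hup p s
  · rw [← abs_neg]
    convert hup (p * a ^ (-s : ℤ)) s using 2
    simp
    ring

lemma exists_abs_height_sub_le (h : CoarseEquiv f f') (hm : 2 ≤ m) (hn : 2 ≤ n) :
    ∃ C : ℝ, ∀ p, |height (f p) - Real.logb n m * height p| ≤ C := by
  obtain ⟨C, hC⟩ := exists_abs_height_image_vertical_sub_le h hm hn
  obtain ⟨c, hc⟩ := exists_abs_height_image_line_le h hn
  refine ⟨2 * C + c + |(height (f 1) : ℝ)|, fun p => ?_⟩
  obtain ⟨i, k, j, hp⟩ := exists_a_pow_mul_eq p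
  obtain rfl : p = 1 * a ^ (-i : ℤ) * b ^ k * a ^ j := by simp [mul_assoc, ← hp]
  have hdown := hC 1 (-i)
  have hline := hc (1 * a ^ (-i : ℤ)) k
  have hup := hC (1 * a ^ (-i : ℤ) * b ^ k) j
  simp only [height_mul, height_inv] at hline
  rify at hline hdown hup
  have hheight : (height (1 * a ^ (-i : ℤ) * b ^ k * a ^ j : BS m) : ℝ) = j - i := by
    simp
    ring
  rw [hheight]
  have hone := abs_le.1 (le_refl |(height (f 1) : ℝ)|)
  rw [abs_le] at hdown hline hup ⊢
  constructor <;> linarith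

end BS

end HeightDistortion

section BoundaryMap

namespace BS

variable {m n : ℕ} [NeZero m] [NeZero n] {f : BS m → BS n} {f' : BS n → BS m}

/-- The ball `offset p + lattice m t` of the `m`-adic boundary of `BS m` consists of the ends of the
rays that rise from the horizontal line of height `t` below `p`. The condition says that `f` sends
balls of radius `m ^ (-t) ≤ n ^ (-K)` into balls of radius `n ^ (c - K)`, hence that it induces a
Lipschitz map of the boundaries. -/
structure IsBoundaryLipschitz (c : ℕ) (f : BS m → BS n) : Prop where
  le_height {t K : ℕ} (hK : n ^ K ≤ m ^ t) {p : BS m} (hp : t ≤ height p) : K - c ≤ height (f p)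
  sub_mem_lattice {t K : ℕ} (hK : n ^ K ≤ m ^ t) {p p' : BS m} (hp : t ≤ height p)
    (hp' : t ≤ height p') (hoffset : offset p - offset p' ∈ lattice m t) :
    offset (f p) - offset (f p') ∈ lattice n (K - c)

lemma offset_image_sub_mem_lattice_of_forall_mul {t K : ℤ}
    (hf : ∀ p, t ≤ height p → ∀ s ∈ ({a, b} : Set (BS m)),
      offset (f (p * s)) - offset (f p) ∈ lattice n K) {p p' : BS m} (hp : t ≤ height p)
    (hp' : t ≤ height p') (hoffset : offset p - offset p' ∈ lattice m t) :
    offset (f p) - offset (f p') ∈ lattice n K := by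
  have hup (i : ℕ) (q : BS m) (hq : t ≤ height q) :
      offset (f (q * a ^ i)) - offset (f q) ∈ lattice n K := by
    induction i with
    | zero => simp
    | succ i ih =>
      have hstep := hf (q * a ^ i) (by simp only [height_mul, height_pow, height_a]; omega) a
        (by simp)
      simpa [pow_succ, mul_assoc] using add_mem hstep ih
  have hacross (z : ℤ) (q : BS m) (hq : t ≤ height q) :
      offset (f (q * b ^ z)) - offset (f q) ∈ lattice n K := by
    have hstep (z : ℤ) := hf (q * b ^ z) (by simpa using hq) b (by simp)
    simp only [mul_assoc, ← zpow_add_one] at hstep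
    induction z with
    | zero => simp
    | succ z ih => simpa using add_mem (hstep z) ih
    | pred z ih => simpa using sub_mem ih (hstep (-z - 1))
  obtain ⟨z, hz⟩ := mem_lattice.1 hoffset
  obtain ⟨i, hi⟩ := Int.eq_ofNat_of_zero_le (sub_nonneg.2 hp)
  obtain ⟨i', hi'⟩ := Int.eq_ofNat_of_zero_le (sub_nonneg.2 hp')
  obtain ⟨q, rfl⟩ : ∃ q, p' = q * a ^ i' := ⟨p' * (a ^ i')⁻¹, by simp⟩
  have hq : height q = t := by
    simp only [height_mul, height_pow, height_a] at hi'
    omega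
  obtain rfl : p = q * b ^ z * a ^ i := by
    apply ext
    · simp only [offset_mul, offset_a_pow, offset_b_zpow, hq] at hz ⊢
      linarith
    · simp only [height_mul, height_pow, height_zpow, height_a, height_b, hq]
      omega
  have hdiff := sub_mem (add_mem (hup i (q * b ^ z) (by simp [hq])) (hacross z q hq.ge))
    (hup i' q hq.ge)
  rwa [sub_add_sub_cancel, sub_sub_sub_cancel_right] at hdiff

lemma exists_offset_image_sub_mem_lattice (hf : IsBornologous f) :
    ∃ c : ℕ, ∀ t K : ℤ, (∀ p, t ≤ height p → K ≤ height (f p)) → ∀ p p', t ≤ height p →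
      t ≤ height p' → offset p - offset p' ∈ lattice m t →
        offset (f p) - offset (f p') ∈ lattice n (K - c) := by
  obtain ⟨F, hF, hfF⟩ := hf {a, b} (Set.toFinite _)
  obtain ⟨c, hc⟩ := exists_subset_box hF
  refine ⟨c, fun t K hK p p' => offset_image_sub_mem_lattice_of_forall_mul fun p hp s hs => ?_⟩
  exact lattice_antitone (by linarith [hK p hp])
    (offset_sub_mem_lattice_of_mem_box (hc (hfF p (p * s) (by simpa using hs))))

lemma exists_sub_le_height_image (h : CoarseEquiv f f') (hm : 2 ≤ m) (hn : 2 ≤ n) :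
    ∃ c : ℕ, ∀ t K : ℕ, n ^ K ≤ m ^ t → ∀ p, t ≤ height p → K - c ≤ height (f p) := by
  obtain ⟨C, hC⟩ := exists_abs_height_sub_le h hm hn
  refine ⟨⌈C⌉₊, fun t K hK p hp => ?_⟩
  have hn1 : (1 : ℝ) < n := mod_cast hn
  have hlog : 0 ≤ Real.logb n m := Real.logb_nonneg hn1 (by norm_cast; omega)
  have hKt : (K : ℝ) ≤ t * Real.logb n m := by
    rw [← Real.logb_pow, Real.le_logb_iff_rpow_le hn1 (by have := NeZero.pos m; positivity),
      Real.rpow_natCast]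
    exact_mod_cast hK
  have htp : (t : ℝ) ≤ height p := mod_cast hp
  have hlower := (abs_le.1 (hC p)).1
  have hceil := Nat.le_ceil C
  suffices (K : ℝ) - ⌈C⌉₊ ≤ height (f p) from mod_cast this
  nlinarith [mul_le_mul_of_nonneg_right htp hlog]

lemma exists_isBoundaryLipschitz (h : CoarseEquiv f f') (hm : 2 ≤ m) (hn : 2 ≤ n) :
    ∃ c, IsBoundaryLipschitz c f := by
  obtain ⟨c, hc⟩ := exists_sub_le_height_image h hm hn
  obtain ⟨d, hd⟩ := exists_offset_image_sub_mem_lattice h.bornologous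
  refine ⟨c + d, fun hK p hp => ?_, fun {t K} hK p p' hp hp' hoffset => ?_⟩
  · have := hc _ _ hK p hp
    push_cast
    linarith
  · rw [Nat.cast_add, ← sub_sub]
    exact hd t (K - c) (hc t K hK) p p' hp hp' hoffset

end BS

end BoundaryMap

section Counting

lemma card_filter_range_mul_of_periodic {P : ℕ → Prop} [DecidablePred P] {u : ℕ}
    (hP : Function.Periodic P u) (v : ℕ) :
    ((Finset.range (u * v)).filter P).card = v * ((Finset.range u).filter P).card := by
  induction v with
  | zero => simp
  | succ v ih =>
    have hshift (r : ℕ) : P (u * v + r) ↔ P r := by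
      rw [add_comm, mul_comm, ← smul_eq_mul]
      exact (hP.nsmul v r).to_iff
    simp only [← Nat.count_eq_card_filter_range] at ih ⊢
    simp only [Nat.mul_succ, Nat.count_add, ih, hshift, Nat.succ_mul]

/-- The least `k` such that `n ^ k` dominates `m ^ (t + c)`. -/
def scale (m n c t : ℕ) : ℕ := Nat.clog n (m ^ (t + c))

lemma scale_monotone {m : ℕ} (hm : 1 ≤ m) (n c : ℕ) : Monotone (scale m n c) := fun _ _ hst =>
  Nat.clog_mono_right n (Nat.pow_le_pow_right hm (by omega))

lemma pow_le_pow_scale {m n c s t : ℕ} (hm : 1 ≤ m) (hn : 2 ≤ n) (hs : s ≤ t + c) :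
    m ^ s ≤ n ^ scale m n c t :=
  (Nat.pow_le_pow_right hm hs).trans (Nat.le_pow_clog hn _)

lemma pow_scale_le {m n : ℕ} (hm : 1 ≤ m) (hn : 2 ≤ n) (c t : ℕ) :
    n ^ scale m n c t ≤ n * m ^ c * m ^ t := by
  have hpos : 1 ≤ m ^ (t + c) := Nat.one_le_pow _ _ hm
  rw [mul_assoc, ← pow_add, add_comm c]
  obtain hk | ⟨k, hk⟩ := (Nat.eq_zero_or_pos (scale m n c t)).imp_right Nat.exists_eq_add_one.2
  · rw [hk]
    nlinarith
  · have hlt : n ^ k < m ^ (t + c) :=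
      (Nat.lt_clog_iff_pow_lt hn).1 (k.lt_succ_self.trans_eq hk.symm)
    rw [hk, pow_succ']
    gcongr

lemma pow_scale_add_sub_le {m n : ℕ} (hm : 1 ≤ m) (hn : 2 ≤ n) (c s d : ℕ) :
    n ^ (scale m n c (s + d) - scale m n c s) ≤ n * m ^ c * m ^ d := by
  have hscale := scale_monotone hm n c (Nat.le_add_right s d)
  refine Nat.le_of_mul_le_mul_left ?_ (Nat.pow_pos (n := s) hm)
  calc m ^ s * n ^ (scale m n c (s + d) - scale m n c s)
      ≤ n ^ scale m n c s * n ^ (scale m n c (s + d) - scale m n c s) :=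
        Nat.mul_le_mul_right _ (pow_le_pow_scale hm hn (Nat.le_add_right s c))
    _ = n ^ scale m n c (s + d) := by rw [← pow_add, Nat.add_sub_cancel' hscale]
    _ ≤ n * m ^ c * m ^ (s + d) := pow_scale_le hm hn c (s + d)
    _ = m ^ s * (n * m ^ c * m ^ d) := by ring

namespace BS

variable {m n : ℕ} [NeZero m] [NeZero n] {f : BS m → BS n} {f' : BS n → BS m} {c t : ℕ}

lemma IsBoundaryLipschitz.sub_mem_lattice_of_scale_le (hf' : IsBoundaryLipschitz c f')
    (hn : 2 ≤ n) {p p' : BS n} (hp : scale m n c t ≤ height p) (hp' : scale m n c t ≤ height p')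
    (hoffset : offset p - offset p' ∈ lattice n (scale m n c t)) :
    offset (f' p) - offset (f' p') ∈ lattice m t := by
  simpa using hf'.sub_mem_lattice (pow_le_pow_scale NeZero.one_le hn le_rfl) hp hp' hoffset

open Classical in
/-- Among the balls of radius `n ^ (-scale m n c t)` partitioning `ℤ`, represented by the integers
`0 ≤ r < n ^ scale m n c t`, the number of those whose image under the boundary map of `f'` lies in
the ball `x + lattice m t`. -/
noncomputable def preimageCount (f' : BS n → BS m) (c : ℕ) (x : ℚ) (t : ℕ) : ℕ :=
  ((Finset.range (n ^ scale m n c t)).filter fun r : ℕ =>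
    offset (f' (b ^ r * a ^ scale m n c t)) - x ∈ lattice m t).card

lemma preimageCount_pos (f' : BS n → BS m) (c t : ℕ) :
    0 < preimageCount f' c (offset (f' (a ^ scale m n c t))) t :=
  Finset.card_pos.2 ⟨0, by simp [NeZero.pos n]⟩

lemma sum_preimageCount (hf' : IsBoundaryLipschitz c f') (hn : 2 ≤ n) (x : ℚ) (t : ℕ) :
    ∑ i ∈ Finset.range m, preimageCount f' c (x + i * (m : ℚ) ^ t) (t + 1) =
      n ^ (scale m n c (t + 1) - scale m n c t) * preimageCount f' c x t := by
  classical
  have hscale : scale m n c t ≤ scale m n c (t + 1) :=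
    scale_monotone NeZero.one_le n c t.le_succ
  have hdiff {r r' k k' : ℕ} (hk : scale m n c t ≤ k) (hk' : scale m n c t ≤ k')
      (hr : (r - r' : ℚ) ∈ lattice n (scale m n c t)) :
      offset (f' (b ^ r * a ^ k)) - x ∈ lattice m t ↔
        offset (f' (b ^ r' * a ^ k')) - x ∈ lattice m t := by
    rw [← sub_add_sub_cancel (offset _) (offset (f' (b ^ r' * a ^ k'))) x]
    exact add_mem_cancel_left
      (hf'.sub_mem_lattice_of_scale_le hn (by simpa) (by simpa) (by simpa))
  have hperiodic : Function.Periodic (fun r : ℕ =>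
      offset (f' (b ^ r * a ^ scale m n c t)) - x ∈ lattice m t) (n ^ scale m n c t) :=
    fun r => propext (hdiff le_rfl le_rfl (mem_lattice.2 ⟨1, by simp⟩))
  simp only [preimageCount, Finset.card_filter, ← sub_sub, Nat.cast_add, Nat.cast_one]
  rw [Finset.sum_comm]
  simp only [← zpow_natCast (m : ℚ) t, sum_range_ite_mem_lattice]
  rw [← Finset.card_filter, ← Finset.card_filter, ← card_filter_range_mul_of_periodic hperiodic,
    ← pow_add, Nat.add_sub_cancel' hscale]
  exact congrArg _ (Finset.filter_congr fun r _ => hdiff hscale le_rfl (by simp))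

lemma natCast_sub_mem_lattice_of_mem_box {d e K : ℕ} (hf : IsBoundaryLipschitz d f)
    (hf' : IsBoundaryLipschitz c f') (hn : 2 ≤ n) (hK : n ^ K ≤ m ^ t)
    (hKscale : K ≤ scale m n c t) (hbox : ∀ q, q⁻¹ * f (f' q) ∈ box n e) {r r' : ℕ}
    (hr : offset (f' (b ^ r * a ^ scale m n c t)) - offset (f' (b ^ r' * a ^ scale m n c t)) ∈
      lattice m t) :
    (r - r' : ℚ) ∈ lattice n (K - (d + e)) := by
  have hheight (r : ℕ) : t ≤ height (f' (b ^ r * a ^ scale m n c t)) := by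
    simpa using hf'.le_height (p := b ^ r * a ^ scale m n c t)
      (pow_le_pow_scale (c := c) (t := t) NeZero.one_le hn le_rfl) (by simp)
  have hclose (r : ℕ) :
      offset (f (f' (b ^ r * a ^ scale m n c t))) - r ∈ lattice n (K - (d + e)) := by
    have hoffset := offset_sub_mem_lattice_of_mem_box (hbox (b ^ r * a ^ scale m n c t))
    simp only [offset_mul, offset_b_pow, offset_a_pow, mul_zero, add_zero, height_mul, height_pow,
      height_a, height_b, mul_one, zero_add] at hoffset
    exact lattice_antitone (by omega) hoffset
  have hff' := lattice_antitone (show (K - (d + e) : ℤ) ≤ K - d by omega)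
    (hf.sub_mem_lattice hK (hheight r) (hheight r') hr)
  convert add_mem (sub_mem hff' (hclose r)) (hclose r') using 1
  ring

lemma exists_preimageCount_le (h : CoarseEquiv f f') (hm : 2 ≤ m) (hn : 2 ≤ n)
    (hf' : IsBoundaryLipschitz c f') : ∃ N, ∀ x t, preimageCount f' c x t ≤ N := by
  classical
  obtain ⟨d, hf⟩ := exists_isBoundaryLipschitz h hm hn
  obtain ⟨F, hF, hclose⟩ := h.close'
  obtain ⟨e, he⟩ := exists_subset_box hF
  obtain ⟨C, hC⟩ := pow_unbounded_of_one_lt (n * m ^ c) hn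
  refine ⟨n ^ (C + d + e), fun x t => ?_⟩
  set k := scale m n c t
  obtain hk | hk := le_total k (C + d + e)
  · refine (Finset.card_filter_le _ _).trans ?_
    rw [Finset.card_range]
    gcongr
    omega
  have hK : n ^ (k - C) ≤ m ^ t := by
    refine Nat.le_of_mul_le_mul_left ?_ (NeZero.pos (n ^ C))
    rw [← pow_add, Nat.add_sub_cancel' (by omega)]
    exact (pow_scale_le NeZero.one_le hn c t).trans (Nat.mul_le_mul_right _ hC.le)
  rw [← Finset.card_range (n ^ (C + d + e))]
  refine Finset.card_le_card_of_injOn (· / n ^ (k - (C + d + e))) (fun r hr => ?_)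
    fun r hr r' hr' hdiv => ?_
  · rw [Finset.coe_range, Set.mem_Iio, Nat.div_lt_iff_lt_mul (NeZero.pos _), ← pow_add,
      Nat.add_sub_cancel' hk]
    exact Finset.mem_range.1 (Finset.mem_filter.1 hr).1
  · have hmem := sub_mem (Finset.mem_filter.1 hr).2 (Finset.mem_filter.1 hr').2
    rw [sub_sub_sub_cancel_right] at hmem
    have hlattice := natCast_sub_mem_lattice_of_mem_box hf hf' hn hK (Nat.sub_le _ _)
      (fun q => he (hclose q)) hmem
    have hmod := natCast_sub_mem_lattice.1 (lattice_antitone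
      (show ((k - (C + d + e) : ℕ) : ℤ) ≤ (k - C : ℕ) - (d + e) by omega) hlattice)
    rw [← Nat.div_add_mod r (n ^ (k - (C + d + e))), ← Nat.div_add_mod r' (n ^ (k - (C + d + e))),
      hmod, show r / _ = r' / _ from hdiv]

end BS

end Counting

section Averaging

lemma exists_forall_iSup_sub_le_iterate {α ι : Type*} [Nonempty α] [Fintype ι] {R : α → ℝ}
    (hbdd : BddAbove (Set.range R)) {child : ι → α → α}
    (hmean : ∀ v, ∑ i, R (child i v) = Fintype.card ι * R v) (i : ι) (L : ℕ) {δ : ℝ}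
    (hδ : 0 < δ) : ∃ v, ∀ d ≤ L, (⨆ v, R v) - δ ≤ R ((child i)^[d] v) := by
  classical
  have hM : 1 ≤ (Fintype.card ι : ℝ) := by exact_mod_cast Fintype.card_pos_iff.2 ⟨i⟩
  obtain ⟨v, hv⟩ := exists_lt_of_lt_ciSup
    (sub_lt_self (⨆ v, R v) (by positivity : 0 < δ / (Fintype.card ι : ℝ) ^ L))
  have hchild (w : α) : Fintype.card ι * R w ≤ R (child i w) + (Fintype.card ι - 1) * ⨆ v, R v := by
    have hsum : ∑ j ∈ Finset.univ.erase i, R (child j w) ≤ (Fintype.card ι - 1) * ⨆ v, R v := by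
      refine (Finset.sum_le_card_nsmul _ _ _ fun j _ => le_ciSup hbdd (child j w)).trans_eq ?_
      rw [nsmul_eq_mul, Finset.card_erase_of_mem (Finset.mem_univ i), Finset.card_univ,
        Nat.cast_pred (Fintype.card_pos_iff.2 ⟨i⟩)]
    rw [← hmean, ← Finset.add_sum_erase _ _ (Finset.mem_univ i)]
    gcongr
  have hiterate (d : ℕ) : (⨆ v, R v) - (Fintype.card ι : ℝ) ^ d * (δ / (Fintype.card ι : ℝ) ^ L) ≤
      R ((child i)^[d] v) := by
    induction d with
    | zero => simpa using hv.le
    | succ d ih =>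
      rw [Function.iterate_succ_apply', pow_succ']
      nlinarith [hchild ((child i)^[d] v)]
  refine ⟨v, fun d hd => le_trans ?_ (hiterate d)⟩
  rw [sub_le_sub_iff_left, mul_div_left_comm]
  exact mul_le_of_le_one_right hδ.le (div_le_one_of_le₀ (pow_le_pow_right₀ hM hd) (by positivity))

lemma exists_lt_eq_of_forall_le {N : ℕ} {g : ℕ → ℕ} (hg : ∀ d, g d ≤ N) :
    ∃ d d', d < d' ∧ d' ≤ N + 1 ∧ g d = g d' := by
  obtain ⟨d, hd, d', hd', hne, heq⟩ := Finset.exists_ne_map_eq_of_card_lt_of_maps_to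
    (s := Finset.range (N + 2)) (t := Finset.range (N + 1)) (f := g) (by simp)
    fun d _ => by simpa [Nat.lt_succ_iff] using hg d
  simp only [Finset.mem_range] at hd hd'
  obtain hlt | hlt := hne.lt_or_gt
  exacts [⟨d, d', hlt, by omega, heq⟩, ⟨d', d, hlt, by omega, heq.symm⟩]

lemma eq_of_mul_natCast_eq_mul_natCast {S δ R R' : ℝ} {u v : ℕ} (hδ : δ * (v + 1) < S)
    (hR : R ∈ Set.Icc (S - δ) S) (hR' : R' ∈ Set.Icc (S - δ) S) (h : R' * v = R * u) : u = v := by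
  by_contra hne
  have hgap : (1 : ℝ) ≤ |(u : ℝ) - v| := by
    have hgap : 1 ≤ |(u : ℤ) - v| := Int.one_le_abs (by omega)
    exact_mod_cast hgap
  have hδ0 : 0 ≤ δ := by linarith [hR.1, hR.2]
  have hR0 : 0 ≤ R := by nlinarith [hR.1, mul_nonneg hδ0 (Nat.cast_nonneg (α := ℝ) v)]
  have hlt : R < R := calc
    R ≤ R * |(u : ℝ) - v| := le_mul_of_one_le_right hR0 hgap
    _ = |R' - R| * v := by
      rw [← abs_of_nonneg hR0, ← abs_mul, abs_of_nonneg hR0, mul_sub, ← h, ← sub_mul, abs_mul,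
        Nat.abs_cast]
    _ ≤ δ * v := by
      gcongr
      rw [abs_le]
      constructor <;> linarith [hR.1, hR.2, hR'.1, hR'.2]
    _ < S - δ := by linarith
    _ ≤ R := hR.1
  exact lt_irrefl R hlt

end Averaging

section Density

namespace BS

variable {m n : ℕ} [NeZero m] {f : BS m → BS n} {f' : BS n → BS m} {c : ℕ}

/-- A pair `(x, t)` stands for the ball `x + lattice m t`, which is the disjoint union of the `m`
balls `subball i (x, t)`. -/
def subball (i : Fin m) (v : ℚ × ℕ) : ℚ × ℕ := (v.1 + i * (m : ℚ) ^ v.2, v.2 + 1)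

lemma iterate_subball_zero (v : ℚ × ℕ) (d : ℕ) :
    (subball (0 : Fin m))^[d] v = (v.1, v.2 + d) := by
  induction d with
  | zero => rfl
  | succ d ih => simp [Function.iterate_succ_apply', ih, subball, add_assoc]

/-- The measure of the union of the balls counted by `preimageCount`, each of measure
`n ^ (-scale m n c t)`, relative to the measure `m ^ (-t)` of the ball `v = (x, t)`: the mean over
`v` of the Jacobian of the inverse of the boundary map of `f'`. -/
noncomputable def preimageDensity (f' : BS n → BS m) (c : ℕ) (v : ℚ × ℕ) : ℝ :=
  preimageCount f' c v.1 v.2 * (m : ℝ) ^ v.2 / (n : ℝ) ^ scale m n c v.2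

lemma preimageDensity_le_preimageCount (hn : 2 ≤ n) (v : ℚ × ℕ) :
    preimageDensity f' c v ≤ preimageCount f' c v.1 v.2 := by
  have hscale : (m : ℝ) ^ v.2 ≤ (n : ℝ) ^ scale m n c v.2 := mod_cast
    pow_le_pow_scale NeZero.one_le hn (Nat.le_add_right v.2 c)
  rw [preimageDensity, mul_div_assoc]
  exact mul_le_of_le_one_right (Nat.cast_nonneg _) (div_le_one_of_le₀ hscale (by positivity))

variable [NeZero n]

lemma sum_preimageDensity_subball (hf' : IsBoundaryLipschitz c f') (hn : 2 ≤ n) (v : ℚ × ℕ) :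
    ∑ i : Fin m, preimageDensity f' c (subball i v) = Fintype.card (Fin m) *
      preimageDensity f' c v := by
  have hsum := sum_preimageCount hf' hn v.1 v.2
  rw [← Fin.sum_univ_eq_sum_range
    fun i => preimageCount f' c (v.1 + i * (m : ℚ) ^ v.2) (v.2 + 1)] at hsum
  simp only [preimageDensity, subball, ← Finset.sum_div, ← Finset.sum_mul, ← Nat.cast_sum, hsum]
  have hscale := pow_sub_mul_pow (n : ℝ) (scale_monotone (m := m) NeZero.one_le n c v.2.le_succ)
  rw [← hscale, pow_succ, Fintype.card_fin]
  push_cast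
  field_simp

lemma preimageDensity_mul_pow {x : ℚ} {s d : ℕ}
    (h : preimageCount f' c x s = preimageCount f' c x (s + d)) :
    preimageDensity f' c (x, s + d) * (n : ℝ) ^ (scale m n c (s + d) - scale m n c s) =
      preimageDensity f' c (x, s) * (m : ℝ) ^ d := by
  have hn0 : (n : ℝ) ≠ 0 := NeZero.ne _
  have hscale := pow_sub_mul_pow (n : ℝ)
    (scale_monotone (m := m) NeZero.one_le n c (Nat.le_add_right s d))
  simp only [preimageDensity, h]
  rw [← hscale, pow_add]
  field_simp

lemma exists_pow_eq_pow (h : CoarseEquiv f f') (hm : 2 ≤ m) (hn : 2 ≤ n) :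
    ∃ d e : ℕ, 0 < d ∧ m ^ d = n ^ e := by
  obtain ⟨c, hf'⟩ := exists_isBoundaryLipschitz h.symm hn hm
  obtain ⟨N, hN⟩ := exists_preimageCount_le h hm hn hf'
  have hbdd : BddAbove (Set.range (preimageDensity f' c)) := ⟨N, by
    rintro _ ⟨v, rfl⟩
    exact (preimageDensity_le_preimageCount hn v).trans (mod_cast hN v.1 v.2)⟩
  set S := ⨆ v, preimageDensity f' c v
  have hS : 0 < S := by
    refine lt_of_lt_of_le ?_ (le_ciSup hbdd (offset (f' (a ^ scale m n c 0)), 0))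
    have hcount := preimageCount_pos f' c 0
    simp only [preimageDensity]
    positivity
  let Q : ℕ := n * m ^ c * m ^ (N + 1)
  obtain ⟨⟨x, t⟩, hv⟩ := exists_forall_iSup_sub_le_iterate hbdd (sum_preimageDensity_subball hf' hn)
    0 (N + 1) (by positivity : 0 < S / (Q + 2))
  simp only [iterate_subball_zero] at hv
  obtain ⟨d, d', hlt, hd', hcount⟩ := exists_lt_eq_of_forall_le fun d => hN x (t + d)
  obtain ⟨u, rfl⟩ := Nat.exists_eq_add_of_le hlt.le
  have hv' := hv (d + u) hd'
  rw [← add_assoc] at hcount hv'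
  have hQ : n ^ (scale m n c (t + d + u) - scale m n c (t + d)) ≤ Q :=
    (pow_scale_add_sub_le NeZero.one_le hn c (t + d) u).trans
      (Nat.mul_le_mul_left _ (Nat.pow_le_pow_right NeZero.one_le (by omega)))
  have hδ : S / (Q + 2) * ((n ^ (scale m n c (t + d + u) - scale m n c (t + d)) : ℕ) + 1) < S := by
    rw [div_mul_eq_mul_div, div_lt_iff₀ (by positivity)]
    exact mul_lt_mul_of_pos_left (by linarith [Nat.cast_le (α := ℝ).2 hQ]) hS
  exact ⟨u, _, by omega, eq_of_mul_natCast_eq_mul_natCast hδ ⟨hv d (by omega), le_ciSup hbdd _⟩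
    ⟨hv', le_ciSup hbdd _⟩ (mod_cast preimageDensity_mul_pow hcount)⟩

lemma _root_.QuasiIsometricGroups.exists_eq_pow (hm : 2 ≤ m) (hn : 2 ≤ n)
    (h : QuasiIsometricGroups (BS m) (BS n)) :
    ∃ r j k : ℕ, 0 < j ∧ 0 < k ∧ m = r ^ j ∧ n = r ^ k := by
  obtain ⟨f, f', hf⟩ := h.exists_coarseEquiv
  obtain ⟨d, e, hd, hde⟩ := exists_pow_eq_pow hf hm hn
  have he : 0 < e := by
    by_contra! he
    exact (Nat.one_lt_pow hd.ne' hm).ne' (by simpa [Nat.le_zero.1 he] using hde)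
  obtain ⟨r, hr, hr'⟩ := Nat.exists_eq_pow_of_pow_eq_pow (Or.inl hd.ne') hde
  exact ⟨r, _, _, Nat.div_pos (Nat.gcd_le_right _ he) (Nat.gcd_pos_of_pos_left _ hd),
    Nat.div_pos (Nat.gcd_le_left _ hd) (Nat.gcd_pos_of_pos_left _ hd), hr, hr'⟩

end BS

end Density

/-- **Farb–Mosher classification of solvable Baumslag–Solitar groups.**
For integers `m, n ≥ 2` the following are equivalent: `BS(1,m)` and `BS(1,n)`
are quasi-isometric; they are commensurable; there are integers `r, j, k > 0`
with `m = r^j` and `n = r^k`. -/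
theorem BS_quasiIsometry_classification (m n : ℕ) (hm : 2 ≤ m) (hn : 2 ≤ n) :
    (QuasiIsometricGroups (BS m) (BS n) ↔ CommensurableGroups (BS m) (BS n)) ∧
    (QuasiIsometricGroups (BS m) (BS n) ↔
      ∃ r j k : ℕ, 0 < j ∧ 0 < k ∧ m = r ^ j ∧ n = r ^ k) := by
  have : NeZero m := ⟨by omega⟩
  have : NeZero n := ⟨by omega⟩
  have commensurable_of_powers :
      (∃ r j k : ℕ, 0 < j ∧ 0 < k ∧ m = r ^ j ∧ n = r ^ k) → CommensurableGroups (BS m) (BS n) := by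
    rintro ⟨r, j, k, hj, hk, rfl, rfl⟩
    exact BS.commensurableGroups_of_pow_eq_pow hk.ne' hj.ne' (pow_right_comm r j k)
  exact ⟨⟨fun h => commensurable_of_powers (h.exists_eq_pow hm hn),
      CommensurableGroups.quasiIsometricGroups⟩,
    QuasiIsometricGroups.exists_eq_pow hm hn,
    fun h => (commensurable_of_powers h).quasiIsometricGroups⟩
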